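/- arXiv:1009.2022 — 4 statements merged into one kernel-verified Lean document; each statement's English description precedes it below -/
import Mathlib

section
/- Let ν ≥ 2 be an integer and let L be the normalized inverse-linear loss with parameters a, b ≥ 0, (a,b) ≠ (0,0). For the estimator p̂ = Ω_il/(N+d) with any d ∈ [Ω_il−ν, 0], the risk R(p) satisfies R(p) < a(ν/Ω_il − 1) + (aν/Ω_il + b) Ω_il^{ν−1} e^{−Ω_il} / (ν−1)! for every p ∈ (0,1), and moreover lim_{p→0⁺} R(p) = a(ν/Ω_il − 1) + (aν/Ω_il + b) Ω_il^{ν−1} e^{−Ω_il} / (ν−1)!. -/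
open Real Filter Set

/-- Negative binomial probability function. -/
noncomputable def negBinomPMF (ν : ℕ) (p : ℝ) (n : ℕ) : ℝ :=
  (Nat.choose (n - 1) (ν - 1) : ℝ) * p ^ ν * (1 - p) ^ (n - ν)

/-- Risk of the estimator `g` under loss `L` in inverse binomial sampling. -/
noncomputable def risk (ν : ℕ) (L : ℝ → ℝ) (g : ℕ → ℝ) (p : ℝ) : ℝ :=
  ∑' n : ℕ, if ν ≤ n then negBinomPMF ν p n * L (g n / p) else 0

/-- Normalized inverse-linear loss. -/
noncomputable def invLinLoss (a b x : ℝ) : ℝ :=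
  if x ≤ 1 then a * (1 / x - 1) else b * (x - 1)

/-- The value `Ω_il` for the inverse-linear loss. -/
noncomputable def OmegaIL (ν : ℕ) (a b : ℝ) : ℝ :=
  if 0 < a ∧ 0 < b then
    ((ν : ℝ) - 1) *
      (1 + (a + b) / (2 * b) *
        (Real.sqrt (1 + 4 * a * b / (((ν : ℝ) - 1) * (a + b) ^ 2)) - 1))
  else if a = 0 then (ν : ℝ) - 1
  else (ν : ℝ)

/-!
With `N` negative binomial, a sum of `N` independent exponential variables of mean `p` is a
unit-rate gamma variable of shape `ν`, so `gammaMeasure ν 1` is the mixture of the measures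
`gammaMeasure n p⁻¹` with weights `negBinomPMF ν p n`. Writing `ℓ y = invLinLoss a b (Ω / y)`, the
risk averages `ℓ (p * (n + d))` over these weights. The function `ℓ` is the maximum of a function
affine in `y` and a function affine in `y⁻¹`, and for `-1 ≤ d ≤ 0` the point `p * (n + d)` lies
between the harmonic mean `p * (n - 1)` and the mean `p * n` of `gammaMeasure n p⁻¹`. Hence
`ℓ (p * (n + d))` is less than the integral of `ℓ` against `gammaMeasure n p⁻¹`, and the risk is
less than the integral of `ℓ` against `gammaMeasure ν 1`. That integral is the limit as `p → 0`,
by Fatou's lemma and the local limit theorem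
`negBinomPMF ν p (⌊y / p⌋₊ + ν) / p → gammaPDFReal ν 1 y`. For a general `Ω` it involves the
incomplete gamma function, whose coefficient vanishes exactly when `Ω` solves the quadratic
equation defining `OmegaIL`.
-/

open MeasureTheory ProbabilityTheory
open scoped Topology ENNReal

section Gamma

variable {s r : ℝ}

lemma mul_gammaPDFReal (hs : 0 < s) (hr : 0 < r) (y : ℝ) :
    y * gammaPDFReal s r y = s / r * gammaPDFReal (s + 1) r y := by
  rcases lt_or_ge y 0 with hy | hy
  · simp [gammaPDFReal, hy.not_ge]
  have hpow : y * y ^ (s - 1) = y ^ s := by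
    simpa using (rpow_one_add' hy (y := s - 1) (by simpa using hs.ne')).symm
  have hΓ := (Gamma_pos_of_pos hs).ne'
  simp only [gammaPDFReal, if_pos hy, Gamma_add_one hs.ne', rpow_add_one hr.ne',
    add_sub_cancel_right, ← hpow]
  field_simp

lemma inv_mul_gammaPDFReal (hs : 1 < s) (hr : 0 < r) {y : ℝ} (hy : y ≠ 0) :
    y⁻¹ * gammaPDFReal s r y = r / (s - 1) * gammaPDFReal (s - 1) r y := by
  have hs' : 0 < s - 1 := by linarith
  have h := mul_gammaPDFReal hs' hr y
  rw [sub_add_cancel] at h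
  field_simp at h ⊢
  linear_combination -h

lemma hasDerivAt_gammaPDFReal_add_one (hs : 0 < s) (hr : 0 < r) {y : ℝ} (hy : 0 < y) :
    HasDerivAt (gammaPDFReal (s + 1) r)
      (r * (gammaPDFReal s r y - gammaPDFReal (s + 1) r y)) y := by
  have hexp : HasDerivAt (fun x : ℝ => exp (-(r * x))) (exp (-(r * y)) * -(r * 1)) y :=
    ((hasDerivAt_id y).const_mul r).neg.exp
  have hderiv := ((hasDerivAt_rpow_const (p := s) (.inl hy.ne')).mul hexp).const_mul
    (r ^ (s + 1) / Gamma (s + 1))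
  have hcongr : gammaPDFReal (s + 1) r =ᶠ[𝓝 y]
      fun x => r ^ (s + 1) / Gamma (s + 1) * (x ^ s * exp (-(r * x))) := by
    filter_upwards [Ioi_mem_nhds hy] with x hx
    rw [gammaPDFReal, if_pos (le_of_lt hx), add_sub_cancel_right, mul_assoc]
  refine (hderiv.congr_of_eventuallyEq hcongr).congr_deriv ?_
  have hΓ := (Gamma_pos_of_pos hs).ne'
  simp only [gammaPDFReal, if_pos hy.le, Gamma_add_one hs.ne', rpow_add_one hr.ne',
    add_sub_cancel_right]
  field_simp
  ring

lemma tendsto_gammaPDFReal_atTop (hr : 0 < r) : Tendsto (gammaPDFReal s r) atTop (𝓝 0) := by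
  have h := (tendsto_rpow_mul_exp_neg_mul_atTop_nhds_zero (s - 1) r hr).const_mul (r ^ s / Gamma s)
  rw [mul_zero] at h
  refine h.congr' ?_
  filter_upwards [eventually_ge_atTop 0] with y hy
  rw [gammaPDFReal, if_pos hy, neg_mul, mul_assoc]

lemma gammaPDFReal_natCast {n : ℕ} (hn : n ≠ 0) {y : ℝ} (hy : 0 ≤ y) :
    gammaPDFReal n r y = r ^ n / (n - 1).factorial * y ^ (n - 1) * exp (-(r * y)) := by
  obtain ⟨k, rfl⟩ := Nat.exists_eq_succ_of_ne_zero hn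
  simp [gammaPDFReal, hy, Gamma_nat_eq_factorial, ← rpow_natCast]

lemma measurable_gammaPDF (s r : ℝ) : Measurable (gammaPDF s r) :=
  (measurable_gammaPDFReal s r).ennreal_ofReal

lemma ae_pos_gammaMeasure (s r : ℝ) : ∀ᵐ y ∂gammaMeasure s r, 0 < y := by
  refine (ae_withDensity_iff (measurable_gammaPDF s r)).2 ?_
  filter_upwards [volume.ae_ne 0] with y hy0 hpdf
  exact lt_of_not_ge fun hy => hpdf (gammaPDF_of_neg (lt_of_le_of_ne hy hy0))

lemma gammaMeasure_ne_zero_of_volume (hs : 0 < s) (hr : 0 < r) {A : Set ℝ}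
    (hA : volume (Ioi 0 ∩ A) ≠ 0) : gammaMeasure s r A ≠ 0 := by
  rw [gammaMeasure, Ne, withDensity_apply_eq_zero (measurable_gammaPDF s r)]
  have hsub : Ioi 0 ∩ A ⊆ {y | gammaPDF s r y ≠ 0} ∩ A := by
    gcongr
    exact fun y hy => (ENNReal.ofReal_pos.2 (gammaPDFReal_pos hs hr hy)).ne'
  exact fun h => hA (measure_mono_null hsub h)

lemma toReal_gammaPDF (hs : 0 < s) (hr : 0 < r) (y : ℝ) :
    (gammaPDF s r y).toReal = gammaPDFReal s r y :=
  ENNReal.toReal_ofReal (gammaPDFReal_nonneg hs hr y)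

lemma integrable_gammaMeasure_iff (hs : 0 < s) (hr : 0 < r) {f : ℝ → ℝ} :
    Integrable f (gammaMeasure s r) ↔ Integrable fun y => gammaPDFReal s r y * f y := by
  simp_rw [gammaMeasure, integrable_withDensity_iff_integrable_smul' (measurable_gammaPDF s r)
    (ae_of_all _ fun _ => ENNReal.ofReal_lt_top), toReal_gammaPDF hs hr, smul_eq_mul]

lemma setIntegral_gammaMeasure (hs : 0 < s) (hr : 0 < r) {A : Set ℝ} (hA : MeasurableSet A)
    (f : ℝ → ℝ) : ∫ y in A, f y ∂gammaMeasure s r = ∫ y in A, gammaPDFReal s r y * f y := by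
  simp_rw [gammaMeasure, setIntegral_withDensity_eq_setIntegral_toReal_smul
    (measurable_gammaPDF s r) (ae_of_all _ fun _ => ENNReal.ofReal_lt_top) f hA,
    toReal_gammaPDF hs hr, smul_eq_mul]

lemma gammaMeasure_real_eq_setIntegral (hs : 0 < s) (hr : 0 < r) {A : Set ℝ}
    (hA : MeasurableSet A) : (gammaMeasure s r).real A = ∫ y in A, gammaPDFReal s r y := by
  simpa using setIntegral_gammaMeasure hs hr hA fun _ => 1

lemma integrable_gammaPDFReal (hs : 0 < s) (hr : 0 < r) : Integrable (gammaPDFReal s r) := by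
  have := isProbabilityMeasure_gammaMeasure hs hr
  simpa using (integrable_gammaMeasure_iff hs hr).1 (integrable_const 1)

lemma integrable_id_gammaMeasure (hs : 0 < s) (hr : 0 < r) :
    Integrable (fun y => y) (gammaMeasure s r) := by
  rw [integrable_gammaMeasure_iff hs hr]
  simp_rw [mul_comm _ (_ : ℝ), mul_gammaPDFReal hs hr]
  exact (integrable_gammaPDFReal (by linarith) hr).const_mul _

lemma integrable_inv_gammaMeasure (hs : 1 < s) (hr : 0 < r) :
    Integrable (fun y => y⁻¹) (gammaMeasure s r) := by
  rw [integrable_gammaMeasure_iff (by linarith) hr]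
  refine ((integrable_gammaPDFReal (sub_pos.2 hs) hr).const_mul (r / (s - 1))).congr ?_
  filter_upwards [volume.ae_ne 0] with y hy
  rw [mul_comm _ y⁻¹, inv_mul_gammaPDFReal hs hr hy]

lemma setIntegral_id_gammaMeasure (hs : 0 < s) (hr : 0 < r) {A : Set ℝ} (hA : MeasurableSet A) :
    ∫ y in A, y ∂gammaMeasure s r = s / r * (gammaMeasure (s + 1) r).real A := by
  simp_rw [setIntegral_gammaMeasure hs hr hA, mul_comm _ (_ : ℝ), mul_gammaPDFReal hs hr]
  rw [integral_const_mul, gammaMeasure_real_eq_setIntegral (by linarith) hr hA]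

lemma setIntegral_inv_gammaMeasure (hs : 1 < s) (hr : 0 < r) {A : Set ℝ} (hA : MeasurableSet A) :
    ∫ y in A, y⁻¹ ∂gammaMeasure s r = r / (s - 1) * (gammaMeasure (s - 1) r).real A := by
  rw [setIntegral_gammaMeasure (by linarith) hr hA,
    gammaMeasure_real_eq_setIntegral (sub_pos.2 hs) hr hA, ← integral_const_mul]
  refine integral_congr_ae (ae_restrict_of_ae ?_)
  filter_upwards [volume.ae_ne 0] with y hy
  rw [mul_comm _ y⁻¹, inv_mul_gammaPDFReal hs hr hy]

lemma integral_id_gammaMeasure (hs : 0 < s) (hr : 0 < r) :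
    ∫ y, y ∂gammaMeasure s r = s / r := by
  have := isProbabilityMeasure_gammaMeasure (by linarith : 0 < s + 1) hr
  simpa using setIntegral_id_gammaMeasure hs hr .univ

lemma integral_inv_gammaMeasure (hs : 1 < s) (hr : 0 < r) :
    ∫ y, y⁻¹ ∂gammaMeasure s r = r / (s - 1) := by
  have := isProbabilityMeasure_gammaMeasure (sub_pos.2 hs) hr
  simpa using setIntegral_inv_gammaMeasure hs hr .univ

lemma gammaMeasure_add_one_real_Ioi (hs : 0 < s) (hr : 0 < r) {x : ℝ} (hx : 0 < x) :
    (gammaMeasure (s + 1) r).real (Ioi x) =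
      (gammaMeasure s r).real (Ioi x) + gammaPDFReal (s + 1) r x / r := by
  have hint := integrable_gammaPDFReal hs hr
  have hint' := integrable_gammaPDFReal (by linarith : 0 < s + 1) hr
  have hftc := integral_Ioi_of_hasDerivAt_of_tendsto'
    (fun y hy => hasDerivAt_gammaPDFReal_add_one hs hr (hx.trans_le hy))
    ((hint.sub hint').const_mul r).integrableOn (tendsto_gammaPDFReal_atTop hr)
  rw [integral_const_mul, integral_sub hint.integrableOn hint'.integrableOn,
    ← gammaMeasure_real_eq_setIntegral hs hr measurableSet_Ioi,
    ← gammaMeasure_real_eq_setIntegral (by linarith) hr measurableSet_Ioi] at hftc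
  field_simp
  linear_combination -hftc

end Gamma

lemma integral_lt_integral_of_ae_lt_on {α : Type*} [MeasurableSpace α] {μ : Measure α}
    {f g : α → ℝ} {A : Set α} (hf : Integrable f μ) (hg : Integrable g μ) (hle : f ≤ᵐ[μ] g)
    (hA : μ A ≠ 0) (hlt : ∀ᵐ x ∂μ, x ∈ A → f x < g x) : ∫ x, f x ∂μ < ∫ x, g x ∂μ := by
  have hnonneg : 0 ≤ᵐ[μ] g - f := hle.mono fun x hx => sub_nonneg.2 hx
  have hsupp : A ≤ᵐ[μ] Function.support (g - f) :=
    hlt.mono fun x hx hxA => (sub_pos.2 (hx hxA)).ne'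
  have hpos : 0 < ∫ x, (g - f) x ∂μ :=
    (integral_pos_iff_support_of_nonneg_ae hnonneg (hg.sub hf)).2
      ((pos_iff_ne_zero.2 hA).trans_le (measure_mono_ae hsupp))
  rw [integral_sub' hg hf] at hpos
  exact sub_pos.1 hpos

section InverseLinearLoss

variable {a b x Ω z : ℝ}

lemma invLinLoss_eq_max (ha : 0 ≤ a) (hb : 0 ≤ b) (hx : 0 < x) :
    invLinLoss a b x = max (a * (1 / x - 1)) (b * (x - 1)) := by
  rcases le_or_gt x 1 with h | h
  · rw [invLinLoss, if_pos h, max_eq_left]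
    exact (mul_nonpos_of_nonneg_of_nonpos hb (by linarith)).trans
      (mul_nonneg ha (sub_nonneg.2 ((one_le_div hx).2 h)))
  · rw [invLinLoss, if_neg h.not_ge, max_eq_right]
    exact (mul_nonpos_of_nonneg_of_nonpos ha (sub_nonpos.2 ((div_le_one hx).2 h.le))).trans
      (mul_nonneg hb (by linarith))

lemma invLinLoss_of_one_le (h : 1 ≤ x) : invLinLoss a b x = b * (x - 1) := by
  rcases h.eq_or_lt with rfl | h
  · simp [invLinLoss]
  · rw [invLinLoss, if_neg h.not_ge]

lemma mul_one_div_sub_one_le_invLinLoss (ha : 0 ≤ a) (hb : 0 ≤ b) (hx : 0 < x) :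
    a * (1 / x - 1) ≤ invLinLoss a b x :=
  invLinLoss_eq_max ha hb hx ▸ le_max_left _ _

lemma mul_sub_one_le_invLinLoss (ha : 0 ≤ a) (hb : 0 ≤ b) (hx : 0 < x) :
    b * (x - 1) ≤ invLinLoss a b x :=
  invLinLoss_eq_max ha hb hx ▸ le_max_right _ _

lemma mul_one_div_sub_one_lt_invLinLoss (ha : 0 ≤ a) (hb : 0 ≤ b) (hab : 0 < a + b) (hx : 1 < x) :
    a * (1 / x - 1) < invLinLoss a b x := by
  have hinv : 1 / x < 1 := (div_lt_one (by linarith)).2 hx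
  rw [invLinLoss_of_one_le hx.le]
  rcases ha.eq_or_lt with rfl | ha
  · nlinarith
  · nlinarith [mul_nonneg hb (sub_nonneg.2 hx.le)]

lemma mul_sub_one_lt_invLinLoss (ha : 0 ≤ a) (hb : 0 ≤ b) (hab : 0 < a + b) (hx : 0 < x)
    (hx1 : x < 1) : b * (x - 1) < invLinLoss a b x := by
  have hinv : 1 < 1 / x := (one_lt_div hx).2 hx1
  rw [invLinLoss, if_pos hx1.le]
  rcases ha.eq_or_lt with rfl | ha
  · nlinarith
  · nlinarith [mul_nonneg hb (sub_nonneg.2 hx1.le)]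

lemma invLinLoss_nonneg (ha : 0 ≤ a) (hb : 0 ≤ b) (hx : 0 < x) : 0 ≤ invLinLoss a b x := by
  rcases le_total x 1 with h | h
  · exact (mul_nonneg ha (sub_nonneg.2 ((one_le_div hx).2 h))).trans
      (mul_one_div_sub_one_le_invLinLoss ha hb hx)
  · exact (mul_nonneg hb (sub_nonneg.2 h)).trans (mul_sub_one_le_invLinLoss ha hb hx)

lemma invLinLoss_le (ha : 0 ≤ a) (hb : 0 ≤ b) (hx : 0 < x) :
    invLinLoss a b x ≤ a * (1 / x) + b * x := by
  have ha' : 0 ≤ a * (1 / x) := by positivity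
  have hb' : 0 ≤ b * x := by positivity
  rw [invLinLoss_eq_max ha hb hx, max_le_iff]
  constructor <;> linarith

lemma continuousOn_invLinLoss (ha : 0 ≤ a) (hb : 0 ≤ b) :
    ContinuousOn (invLinLoss a b) (Ioi 0) := by
  have hmax : ContinuousOn (fun x : ℝ => max (a * (1 / x - 1)) (b * (x - 1))) (Ioi 0) := by
    fun_prop (disch := exact fun x hx => (mem_Ioi.1 hx).ne')
  exact hmax.congr fun x hx => invLinLoss_eq_max ha hb hx

lemma measurable_invLinLoss (a b : ℝ) : Measurable (invLinLoss a b) :=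
  Measurable.ite measurableSet_Iic (by fun_prop) (by fun_prop)

variable {μ : Measure ℝ}

lemma integrable_invLinLoss_div (ha : 0 ≤ a) (hb : 0 ≤ b) (hΩ : 0 < Ω) (hpos : ∀ᵐ y ∂μ, 0 < y)
    (hid : Integrable (fun y => y) μ) (hinv : Integrable (fun y => y⁻¹) μ) :
    Integrable (fun y => invLinLoss a b (Ω / y)) μ := by
  refine ((hid.const_mul (a / Ω)).add (hinv.const_mul (b * Ω))).mono'
    ((measurable_invLinLoss a b).comp (measurable_const.div measurable_id)).aestronglyMeasurable ?_
  filter_upwards [hpos] with y hy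
  rw [norm_of_nonneg (invLinLoss_nonneg ha hb (div_pos hΩ hy))]
  refine (invLinLoss_le ha hb (div_pos hΩ hy)).trans_eq ?_
  simp only [Pi.add_apply]
  field_simp

/-- Of the two branches of the maximum, only the one active at `z` has to be averaged; the loss
strictly exceeds it on the other side of `Ω`. -/
lemma invLinLoss_div_lt_integral [IsProbabilityMeasure μ] (ha : 0 ≤ a) (hb : 0 ≤ b)
    (hab : 0 < a + b) (hΩ : 0 < Ω) (hpos : ∀ᵐ y ∂μ, 0 < y)
    (hid : Integrable (fun y => y) μ) (hinv : Integrable (fun y => y⁻¹) μ)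
    (hIio : μ (Iio Ω) ≠ 0) (hIoi : μ (Ioi Ω) ≠ 0) (hz : 0 < z) (hz_le : z ≤ ∫ y, y ∂μ)
    (hz_inv_le : z⁻¹ ≤ ∫ y, y⁻¹ ∂μ) :
    invLinLoss a b (Ω / z) < ∫ y, invLinLoss a b (Ω / y) ∂μ := by
  have hint := integrable_invLinLoss_div ha hb hΩ hpos hid hinv
  rcases le_total Ω z with h | h
  · calc invLinLoss a b (Ω / z) = a * (z / Ω - 1) := by
          rw [invLinLoss, if_pos ((div_le_one hz).2 h), one_div_div]
      _ ≤ a * ((∫ y, y ∂μ) / Ω - 1) := by gcongr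
      _ = ∫ y, a * (y / Ω - 1) ∂μ := by
          rw [integral_const_mul, integral_sub (hid.div_const Ω) (integrable_const 1),
            integral_div, integral_const, probReal_univ, one_smul]
      _ < ∫ y, invLinLoss a b (Ω / y) ∂μ := by
          refine integral_lt_integral_of_ae_lt_on
            (((hid.div_const Ω).sub (integrable_const 1)).const_mul a) hint ?_ hIio ?_
          · filter_upwards [hpos] with y hy
            simpa using mul_one_div_sub_one_le_invLinLoss ha hb (div_pos hΩ hy)
          · filter_upwards [hpos] with y hy hyΩ
            simpa using mul_one_div_sub_one_lt_invLinLoss ha hb hab ((one_lt_div hy).2 hyΩ)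
  · calc invLinLoss a b (Ω / z) = b * (Ω * z⁻¹ - 1) :=
          invLinLoss_of_one_le ((one_le_div hz).2 h)
      _ ≤ b * (Ω * (∫ y, y⁻¹ ∂μ) - 1) := by gcongr
      _ = ∫ y, b * (Ω * y⁻¹ - 1) ∂μ := by
          rw [integral_const_mul, integral_sub (hinv.const_mul Ω) (integrable_const 1),
            integral_const_mul, integral_const, probReal_univ, one_smul]
      _ < ∫ y, invLinLoss a b (Ω / y) ∂μ := by
          refine integral_lt_integral_of_ae_lt_on
            (((hinv.const_mul Ω).sub (integrable_const 1)).const_mul b) hint ?_ hIoi ?_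
          · filter_upwards [hpos] with y hy
            exact mul_sub_one_le_invLinLoss ha hb (div_pos hΩ hy)
          · filter_upwards [hpos] with y hy hyΩ
            exact mul_sub_one_lt_invLinLoss ha hb hab (div_pos hΩ hy) ((div_lt_one hy).2 hyΩ)

variable {s r : ℝ}

lemma integrable_invLinLoss_div_gammaMeasure (ha : 0 ≤ a) (hb : 0 ≤ b) (hΩ : 0 < Ω) (hs : 1 < s)
    (hr : 0 < r) : Integrable (fun y => invLinLoss a b (Ω / y)) (gammaMeasure s r) :=
  integrable_invLinLoss_div ha hb hΩ (ae_pos_gammaMeasure s r)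
    (integrable_id_gammaMeasure (by linarith) hr) (integrable_inv_gammaMeasure hs hr)

lemma invLinLoss_div_lt_integral_gammaMeasure (ha : 0 ≤ a) (hb : 0 ≤ b) (hab : 0 < a + b)
    (hΩ : 0 < Ω) (hs : 1 < s) (hr : 0 < r) (hz : z ∈ Icc ((s - 1) / r) (s / r)) :
    invLinLoss a b (Ω / z) < ∫ y, invLinLoss a b (Ω / y) ∂gammaMeasure s r := by
  have hs0 : 0 < s := by linarith
  have hs1 : 0 < s - 1 := sub_pos.2 hs
  have := isProbabilityMeasure_gammaMeasure hs0 hr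
  have hIio : gammaMeasure s r (Iio Ω) ≠ 0 :=
    gammaMeasure_ne_zero_of_volume hs0 hr (by simp [Ioi_inter_Iio, hΩ])
  have hIoi : gammaMeasure s r (Ioi Ω) ≠ 0 :=
    gammaMeasure_ne_zero_of_volume hs0 hr (by simp [Ioi_inter_Ioi])
  refine invLinLoss_div_lt_integral ha hb hab hΩ (ae_pos_gammaMeasure s r)
    (integrable_id_gammaMeasure hs0 hr) (integrable_inv_gammaMeasure hs hr) hIio hIoi
    ((div_pos hs1 hr).trans_le hz.1) (hz.2.trans_eq (integral_id_gammaMeasure hs0 hr).symm) ?_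
  rw [integral_inv_gammaMeasure hs hr, ← inv_div]
  exact inv_anti₀ (div_pos hs1 hr) hz.1

lemma setIntegral_Ioi_invLinLoss_div_gammaMeasure (a b : ℝ) (hΩ : 0 < Ω) (hs : 0 < s) :
    ∫ y in Ioi Ω, invLinLoss a b (Ω / y) ∂gammaMeasure s 1 =
      a * (s / Ω - 1) * (gammaMeasure s 1).real (Ioi Ω) + a * gammaPDFReal s 1 Ω := by
  have := isProbabilityMeasure_gammaMeasure hs one_pos
  have hcongr : EqOn (fun y => invLinLoss a b (Ω / y)) (fun y => a * (y / Ω - 1)) (Ioi Ω) := by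
    intro y (hy : Ω < y)
    simp only [invLinLoss, if_pos ((div_le_one (hΩ.trans hy)).2 hy.le), one_div_div]
  have hpdf := mul_gammaPDFReal hs one_pos Ω
  rw [setIntegral_congr_fun measurableSet_Ioi hcongr, integral_const_mul,
    integral_sub ((integrable_id_gammaMeasure hs one_pos).integrableOn.div_const Ω)
      (integrable_const 1),
    integral_div, setIntegral_id_gammaMeasure hs one_pos measurableSet_Ioi, setIntegral_const,
    gammaMeasure_add_one_real_Ioi hs one_pos hΩ, smul_eq_mul]
  field_simp at hpdf ⊢
  linear_combination -a * hpdf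

lemma setIntegral_Iic_invLinLoss_div_gammaMeasure (a b : ℝ) (hΩ : 0 < Ω) (hs : 1 < s) :
    ∫ y in Iic Ω, invLinLoss a b (Ω / y) ∂gammaMeasure s 1 =
      b * (Ω / (s - 1) - 1) * (1 - (gammaMeasure s 1).real (Ioi Ω)) +
        b * Ω / (s - 1) * gammaPDFReal s 1 Ω := by
  have hs1 : 0 < s - 1 := sub_pos.2 hs
  have := isProbabilityMeasure_gammaMeasure (by linarith : 0 < s) one_pos
  have := isProbabilityMeasure_gammaMeasure hs1 one_pos
  have hcongr : ∀ᵐ y ∂gammaMeasure s 1, y ∈ Iic Ω →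
      invLinLoss a b (Ω / y) = b * (Ω * y⁻¹ - 1) := by
    filter_upwards [ae_pos_gammaMeasure s 1] with y hy hyΩ
    exact invLinLoss_of_one_le ((one_le_div hy).2 hyΩ)
  have hstep := gammaMeasure_add_one_real_Ioi hs1 one_pos hΩ
  rw [sub_add_cancel] at hstep
  rw [setIntegral_congr_ae measurableSet_Iic hcongr, integral_const_mul,
    integral_sub ((integrable_inv_gammaMeasure hs one_pos).integrableOn.const_mul Ω)
      (integrable_const 1),
    integral_const_mul, setIntegral_inv_gammaMeasure hs one_pos measurableSet_Iic,
    setIntegral_const, ← compl_Ioi, probReal_compl_eq_one_sub measurableSet_Ioi,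
    probReal_compl_eq_one_sub measurableSet_Ioi, hstep, smul_eq_mul]
  ring

lemma integral_invLinLoss_div_gammaMeasure (ha : 0 ≤ a) (hb : 0 ≤ b) (hΩ : 0 < Ω) (hs : 1 < s)
    (hbal : a * (s / Ω - 1) = b * (Ω / (s - 1) - 1)) :
    ∫ y, invLinLoss a b (Ω / y) ∂gammaMeasure s 1 =
      a * (s / Ω - 1) + (a * s / Ω + b) * gammaPDFReal s 1 Ω := by
  rw [← integral_add_compl measurableSet_Ioi
      (integrable_invLinLoss_div_gammaMeasure ha hb hΩ hs one_pos), compl_Ioi,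
    setIntegral_Ioi_invLinLoss_div_gammaMeasure a b hΩ (by linarith),
    setIntegral_Iic_invLinLoss_div_gammaMeasure a b hΩ hs]
  linear_combination ((gammaMeasure s 1).real (Ioi Ω) - 1 - gammaPDFReal s 1 Ω) * hbal

end InverseLinearLoss

section NegativeBinomial

variable {ν : ℕ} {p r : ℝ} {f L : ℝ → ℝ} {g : ℕ → ℝ}

lemma negBinomPMF_succ_add (k m : ℕ) (p : ℝ) :
    negBinomPMF (k + 1) p (m + (k + 1)) = (m + k).choose k * p ^ (k + 1) * (1 - p) ^ m := by
  simp [negBinomPMF, ← add_assoc]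

lemma negBinomPMF_nonneg (hp : p ∈ Ioo (0 : ℝ) 1) (ν n : ℕ) : 0 ≤ negBinomPMF ν p n := by
  have hp0 := hp.1.le
  have hp1 := sub_nonneg.2 hp.2.le
  unfold negBinomPMF
  positivity

lemma risk_eq_tsum_add (ν : ℕ) (L : ℝ → ℝ) (g : ℕ → ℝ) (p : ℝ) :
    risk ν L g p = ∑' m, negBinomPMF ν p (m + ν) * L (g (m + ν) / p) := by
  have hsupp : (Function.support fun n =>
      if ν ≤ n then negBinomPMF ν p n * L (g n / p) else 0) ⊆ range fun m => m + ν := by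
    intro n hn
    have hνn : ν ≤ n := by
      by_contra h
      exact hn (if_neg h)
    exact ⟨n - ν, Nat.sub_add_cancel hνn⟩
  simpa [risk] using ((add_left_injective ν).tsum_eq hsupp).symm

/-- Retaining each event of a Poisson process of rate `r` with probability `p` leaves a Poisson
process of rate `p * r`, whose `ν`-th event is the `N`-th of the original one. -/
lemma hasSum_negBinomPMF_mul_gammaPDFReal (hν : ν ≠ 0) (p r y : ℝ) :
    HasSum (fun m => negBinomPMF ν p (m + ν) * gammaPDFReal (m + ν : ℕ) r y)
      (gammaPDFReal ν (p * r) y) := by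
  rcases lt_or_ge y 0 with hy | hy
  · simp [gammaPDFReal, hy.not_ge, hasSum_zero]
  obtain ⟨k, rfl⟩ := Nat.exists_eq_succ_of_ne_zero hν
  have hexp := (NormedSpace.expSeries_div_hasSum_exp ((1 - p) * r * y)).mul_left
    ((p * r) ^ (k + 1) / k.factorial * y ^ k * exp (-(r * y)))
  rw [← Real.exp_eq_exp_ℝ, mul_assoc _ (exp _) (exp _), ← Real.exp_add] at hexp
  convert! hexp using 1
  · funext m
    have hchoose : ((m + k).choose k : ℝ) / (m + k).factorial =
        1 / (k.factorial * m.factorial) := by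
      have h : ((m + k).choose k : ℝ) * k.factorial * m.factorial = (m + k).factorial := by
        rw [mul_right_comm]
        exact_mod_cast Nat.add_choose_mul_factorial_mul_factorial m k
      rw [← h]
      have : ((m + k).choose k : ℝ) ≠ 0 := by
        exact_mod_cast (Nat.choose_pos (Nat.le_add_left k m)).ne'
      field_simp
    rw [negBinomPMF_succ_add, gammaPDFReal_natCast (by omega) hy]
    simp only [Nat.succ_eq_add_one, ← add_assoc, Nat.add_sub_cancel, mul_pow]
    linear_combination p ^ (k + 1) * (1 - p) ^ m * r ^ (m + k + 1) * y ^ (m + k) *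
      exp (-(r * y)) * hchoose
  · rw [gammaPDFReal_natCast hν hy]
    simp only [Nat.succ_eq_add_one, Nat.add_sub_cancel]
    ring_nf

lemma gammaMeasure_eq_sum (hν : ν ≠ 0) (hp : p ∈ Ioo (0 : ℝ) 1) (hr : 0 < r) :
    gammaMeasure ν (p * r) = Measure.sum fun m =>
      ENNReal.ofReal (negBinomPMF ν p (m + ν)) • gammaMeasure (m + ν : ℕ) r := by
  have hpdf : gammaPDF ν (p * r) =
      ∑' m, ENNReal.ofReal (negBinomPMF ν p (m + ν)) • gammaPDF (m + ν : ℕ) r := by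
    ext y
    have hsum := hasSum_negBinomPMF_mul_gammaPDFReal hν p r y
    have hnonneg : ∀ m, 0 ≤ gammaPDFReal (m + ν : ℕ) r y := fun m =>
      gammaPDFReal_nonneg (by positivity) hr y
    rw [tsum_apply (Pi.summable.2 fun _ => ENNReal.summable), gammaPDF_eq, ← gammaPDFReal,
      ← hsum.tsum_eq, ENNReal.ofReal_tsum_of_nonneg
        (fun m => mul_nonneg (negBinomPMF_nonneg hp _ _) (hnonneg m)) hsum.summable]
    simp [gammaPDF, ENNReal.ofReal_mul (negBinomPMF_nonneg hp _ _)]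
  have hmeas := fun m : ℕ => measurable_gammaPDF (m + ν : ℕ) r
  rw [gammaMeasure, hpdf, withDensity_tsum fun m => (hmeas m).const_smul _]
  simp_rw [withDensity_smul _ (hmeas _), gammaMeasure]

lemma hasSum_negBinomPMF_mul_integral (hν : ν ≠ 0) (hp : p ∈ Ioo (0 : ℝ) 1) (hr : 0 < r)
    (hf : Integrable f (gammaMeasure ν (p * r))) :
    HasSum (fun m => negBinomPMF ν p (m + ν) * ∫ y, f y ∂gammaMeasure (m + ν : ℕ) r)
      (∫ y, f y ∂gammaMeasure ν (p * r)) := by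
  rw [gammaMeasure_eq_sum hν hp hr] at hf ⊢
  simpa [integral_smul_measure, ENNReal.toReal_ofReal (negBinomPMF_nonneg hp _ _)]
    using hasSum_integral_measure hf

lemma summable_negBinomPMF_mul (hν : ν ≠ 0) (hp : p ∈ Ioo (0 : ℝ) 1) (hr : 0 < r)
    (hf : Integrable f (gammaMeasure ν (p * r))) (hL : ∀ n, ν ≤ n → 0 ≤ L (g n / p))
    (hle : ∀ n, ν ≤ n → L (g n / p) ≤ ∫ y, f y ∂gammaMeasure n r) :
    Summable fun m => negBinomPMF ν p (m + ν) * L (g (m + ν) / p) :=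
  .of_nonneg_of_le
    (fun m => mul_nonneg (negBinomPMF_nonneg hp _ _) (hL _ (Nat.le_add_left ν m)))
    (fun m => mul_le_mul_of_nonneg_left (hle _ (Nat.le_add_left ν m)) (negBinomPMF_nonneg hp _ _))
    (hasSum_negBinomPMF_mul_integral hν hp hr hf).summable

lemma risk_lt_integral (hν : ν ≠ 0) (hp : p ∈ Ioo (0 : ℝ) 1) (hr : 0 < r)
    (hf : Integrable f (gammaMeasure ν (p * r))) (hL : ∀ n, ν ≤ n → 0 ≤ L (g n / p))
    (hlt : ∀ n, ν ≤ n → L (g n / p) < ∫ y, f y ∂gammaMeasure n r) :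
    risk ν L g p < ∫ y, f y ∂gammaMeasure ν (p * r) := by
  have hpmf : 0 < negBinomPMF ν p (0 + ν) := by
    simpa [negBinomPMF] using pow_pos hp.1 ν
  have hlt' : ∀ m, L (g (m + ν) / p) < ∫ y, f y ∂gammaMeasure (m + ν : ℕ) r :=
    fun m => hlt (m + ν) (Nat.le_add_left ν m)
  have hle_term : ∀ m, negBinomPMF ν p (m + ν) * L (g (m + ν) / p) ≤
      negBinomPMF ν p (m + ν) * ∫ y, f y ∂gammaMeasure (m + ν : ℕ) r :=
    fun m => mul_le_mul_of_nonneg_left (hlt' m).le (negBinomPMF_nonneg hp _ _)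
  rw [risk_eq_tsum_add]
  exact hasSum_lt hle_term (mul_lt_mul_of_pos_left (hlt' 0) hpmf)
    (summable_negBinomPMF_mul hν hp hr hf hL fun n hn => (hlt n hn).le).hasSum
    (hasSum_negBinomPMF_mul_integral hν hp hr hf)

end NegativeBinomial

section Limit

variable {y : ℝ}

lemma tendsto_nat_floor_const_div_add (hy : 0 < y) (k : ℕ) :
    Tendsto (fun p => ⌊y / p⌋₊ + k) (𝓝[>] 0) atTop := by
  simp_rw [div_eq_mul_inv]
  exact (tendsto_add_atTop_nat k).comp
    (tendsto_nat_floor_atTop.comp (tendsto_inv_nhdsGT_zero.const_mul_atTop hy))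

lemma tendsto_mul_nat_floor_const_div_add (hy : 0 ≤ y) (c : ℝ) :
    Tendsto (fun p => p * (⌊y / p⌋₊ + c)) (𝓝[>] 0) (𝓝 y) := by
  have hfloor := (tendsto_nat_floor_mul_div_atTop hy).comp (tendsto_inv_nhdsGT_zero (𝕜 := ℝ))
  have hconst : Tendsto (fun p => p * c) (𝓝[>] 0) (𝓝 (0 * c)) :=
    (tendsto_id.mul_const c).mono_left nhdsWithin_le_nhds
  rw [zero_mul] at hconst
  simpa [Function.comp_def, div_eq_mul_inv, mul_add, mul_comm] using hfloor.add hconst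

lemma tendsto_choose_nat_floor_const_div_mul_pow (hy : 0 < y) (k : ℕ) :
    Tendsto (fun p => ((⌊y / p⌋₊ + k).choose k : ℝ) * p ^ k) (𝓝[>] 0)
      (𝓝 (y ^ k / k.factorial)) := by
  have hN := tendsto_nat_floor_const_div_add hy k
  have hequiv := ((isEquivalent_choose k).comp_tendsto hN).mul
    (Asymptotics.IsEquivalent.refl (u := fun p : ℝ => p ^ k))
  refine hequiv.tendsto_nhds_iff.2 ?_
  refine (((tendsto_mul_nat_floor_const_div_add hy.le k).pow k).div_const (k.factorial : ℝ)).congr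
    fun p => ?_
  simp only [Pi.mul_apply, Function.comp_apply, Nat.cast_add, mul_pow]
  ring

lemma tendsto_inv_mul_log_one_sub :
    Tendsto (fun p => p⁻¹ * log (1 - p)) (𝓝[>] 0) (𝓝 (-1)) := by
  have h : HasDerivAt (fun t : ℝ => log (1 - t)) (-1) 0 := by
    simpa using ((hasDerivAt_id (0 : ℝ)).const_sub 1).log (by norm_num)
  simpa using h.tendsto_slope_zero_right

lemma tendsto_one_sub_pow_nat_floor_const_div (hy : 0 ≤ y) :
    Tendsto (fun p => (1 - p) ^ ⌊y / p⌋₊) (𝓝[>] 0) (𝓝 (exp (-y))) := by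
  have h := (tendsto_inv_mul_log_one_sub.mul (tendsto_mul_nat_floor_const_div_add hy 0)).rexp
  rw [neg_one_mul] at h
  refine h.congr' ?_
  filter_upwards [Ioo_mem_nhdsGT one_pos] with p hp
  have hp0 : p ≠ 0 := hp.1.ne'
  rw [← exp_log (pow_pos (sub_pos.2 hp.2) _), log_pow]
  congr 1
  field_simp
  ring

lemma tendsto_negBinomPMF_div {ν : ℕ} (hν : ν ≠ 0) (hy : 0 < y) :
    Tendsto (fun p => negBinomPMF ν p (⌊y / p⌋₊ + ν) / p) (𝓝[>] 0) (𝓝 (gammaPDFReal ν 1 y)) := by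
  rw [gammaPDFReal_natCast hν hy.le]
  obtain ⟨k, rfl⟩ := Nat.exists_eq_succ_of_ne_zero hν
  have h := (tendsto_choose_nat_floor_const_div_mul_pow hy k).mul
    (tendsto_one_sub_pow_nat_floor_const_div hy.le)
  convert! h.congr' ?_ using 2
  · simp only [one_pow, one_mul, Nat.succ_sub_one]
    ring
  · filter_upwards [self_mem_nhdsWithin] with p (hp : 0 < p)
    rw [Nat.succ_eq_add_one, negBinomPMF_succ_add]
    field_simp
    ring

lemma lintegral_nat_floor_div_const {p : ℝ} (hp : 0 < p) (w : ℕ → ℝ≥0∞) :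
    ∫⁻ y in Ioi 0, w ⌊y / p⌋₊ = ENNReal.ofReal p * ∑' n, w n := by
  have hfloor : Measurable fun y : ℝ => ⌊y / p⌋₊ := Nat.measurable_floor.comp (by fun_prop)
  have hcell : ∀ n : ℕ, (fun y : ℝ => ⌊y / p⌋₊) ⁻¹' {n} ∩ Ici 0 = Ico (n * p) ((n + 1) * p) := by
    intro n
    ext y
    simp only [mem_inter_iff, mem_preimage, mem_singleton_iff, mem_Ici, mem_Ico]
    refine ⟨fun ⟨hn, hy⟩ => ?_, fun hy => ?_⟩
    · rwa [Nat.floor_eq_iff (by positivity), le_div_iff₀ hp, div_lt_iff₀ hp] at hn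
    · have hy0 : 0 ≤ y := (by positivity : (0 : ℝ) ≤ n * p).trans hy.1
      rw [Nat.floor_eq_iff (by positivity), le_div_iff₀ hp, div_lt_iff₀ hp]
      exact ⟨hy, hy0⟩
  rw [setLIntegral_congr Ioi_ae_eq_Ici, ← lintegral_map (measurable_of_countable w) hfloor,
    lintegral_countable', ← ENNReal.tsum_mul_left]
  congr 1 with n
  rw [Measure.map_apply hfloor (measurableSet_singleton n),
    Measure.restrict_apply (hfloor (measurableSet_singleton n)), hcell, Real.volume_Ico, mul_comm]
  ring_nf

lemma ofReal_integral_gammaMeasure {s r : ℝ} (hs : 0 < s) (hr : 0 < r) {f : ℝ → ℝ}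
    (hf0 : ∀ y, 0 < y → 0 ≤ f y) (hf : Integrable f (gammaMeasure s r)) :
    ENNReal.ofReal (∫ y, f y ∂gammaMeasure s r) =
      ∫⁻ y in Ioi 0, ENNReal.ofReal (gammaPDFReal s r y * f y) := by
  rw [← Measure.restrict_eq_self_of_ae_mem (ae_pos_gammaMeasure s r)]
  refine (congrArg _ (setIntegral_gammaMeasure hs hr measurableSet_Ioi f)).trans ?_
  refine ofReal_integral_eq_lintegral_ofReal
    ((integrable_gammaMeasure_iff hs hr).1 hf).integrableOn ?_
  filter_upwards [ae_restrict_mem measurableSet_Ioi] with y hy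
  exact mul_nonneg (gammaPDFReal_nonneg hs hr y) (hf0 y hy)

variable {ν : ℕ} {L : ℝ → ℝ} {g : ℕ → ℝ} {Ω : ℝ}

lemma tendsto_apply_nat_floor_const_div_add_div (hΩ : 0 < Ω) (hL : ContinuousOn L (Ioi 0))
    (hg : Tendsto (fun n : ℕ => n * g n) atTop (𝓝 Ω)) (ν : ℕ) (hy : 0 < y) :
    Tendsto (fun p => L (g (⌊y / p⌋₊ + ν) / p)) (𝓝[>] 0) (𝓝 (L (Ω / y))) := by
  have hN := tendsto_nat_floor_const_div_add hy ν
  have hratio := (hg.comp hN).div (tendsto_mul_nat_floor_const_div_add hy.le ν) hy.ne'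
  refine ((hL.continuousAt (Ioi_mem_nhds (div_pos hΩ hy))).tendsto.comp hratio).congr' ?_
  filter_upwards [hN.eventually_ge_atTop 1, self_mem_nhdsWithin] with p hp (hp0 : 0 < p)
  have hne : ((⌊y / p⌋₊ + ν : ℕ) : ℝ) ≠ 0 := by positivity
  simp only [Function.comp_apply, Pi.div_apply, ← Nat.cast_add]
  congr 1
  field_simp

lemma ofReal_integral_le_liminf_risk (hν : ν ≠ 0) (hΩ : 0 < Ω) (hL : ContinuousOn L (Ioi 0))
    (hL0 : ∀ x, 0 < x → 0 ≤ L x) (hg0 : ∀ n, ν ≤ n → 0 < g n)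
    (hg : Tendsto (fun n : ℕ => n * g n) atTop (𝓝 Ω))
    (hint : Integrable (fun y => L (Ω / y)) (gammaMeasure ν 1))
    (hsum : ∀ p ∈ Ioo (0 : ℝ) 1, Summable fun m => negBinomPMF ν p (m + ν) * L (g (m + ν) / p)) :
    ENNReal.ofReal (∫ y, L (Ω / y) ∂gammaMeasure ν 1) ≤
      liminf (fun p => ENNReal.ofReal (risk ν L g p)) (𝓝[>] 0) := by
  set w : ℝ → ℕ → ℝ := fun p m => negBinomPMF ν p (m + ν) * L (g (m + ν) / p) with hw
  have hlim : ∀ y ∈ Ioi (0 : ℝ), Tendsto (fun p => ENNReal.ofReal (w p ⌊y / p⌋₊ / p)) (𝓝[>] 0)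
      (𝓝 (ENNReal.ofReal (gammaPDFReal ν 1 y * L (Ω / y)))) := fun y hy => by
    simp only [hw, mul_div_right_comm]
    exact ENNReal.tendsto_ofReal
      ((tendsto_negBinomPMF_div hν hy).mul
        (tendsto_apply_nat_floor_const_div_add_div hΩ hL hg ν hy))
  have hmeas : ∀ p, Measurable fun y : ℝ => ENNReal.ofReal (w p ⌊y / p⌋₊ / p) := fun p =>
    (measurable_of_countable fun n => ENNReal.ofReal (w p n / p)).comp
      (Nat.measurable_floor.comp (by fun_prop))
  have hrisk : ∀ p ∈ Ioo (0 : ℝ) 1, ∫⁻ y in Ioi 0, ENNReal.ofReal (w p ⌊y / p⌋₊ / p) =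
      ENNReal.ofReal (risk ν L g p) := fun p hp => by
    have hw0 : ∀ m, 0 ≤ w p m := fun m => mul_nonneg (negBinomPMF_nonneg hp _ _)
      (hL0 _ (div_pos (hg0 _ (Nat.le_add_left ν m)) hp.1))
    rw [lintegral_nat_floor_div_const hp.1 fun n => ENNReal.ofReal (w p n / p), risk_eq_tsum_add,
      ENNReal.ofReal_tsum_of_nonneg hw0 (hsum p hp), ← ENNReal.tsum_mul_left]
    simp_rw [← ENNReal.ofReal_mul hp.1.le, mul_div_cancel₀ _ hp.1.ne']
  calc ENNReal.ofReal (∫ y, L (Ω / y) ∂gammaMeasure ν 1)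
      = ∫⁻ y in Ioi 0, ENNReal.ofReal (gammaPDFReal ν 1 y * L (Ω / y)) :=
        ofReal_integral_gammaMeasure (by positivity) one_pos
          (fun y hy => hL0 _ (div_pos hΩ hy)) hint
    _ = ∫⁻ y in Ioi 0, liminf (fun p => ENNReal.ofReal (w p ⌊y / p⌋₊ / p)) (𝓝[>] 0) :=
        setLIntegral_congr_fun measurableSet_Ioi fun y hy => (hlim y hy).liminf_eq.symm
    _ ≤ liminf (fun p => ∫⁻ y in Ioi 0, ENNReal.ofReal (w p ⌊y / p⌋₊ / p)) (𝓝[>] 0) :=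
        lintegral_liminf_le hmeas
    _ = liminf (fun p => ENNReal.ofReal (risk ν L g p)) (𝓝[>] 0) :=
        liminf_congr (eventually_of_mem (Ioo_mem_nhdsGT one_pos) hrisk)

lemma tendsto_risk (hν : ν ≠ 0) (hΩ : 0 < Ω) (hL : ContinuousOn L (Ioi 0))
    (hL0 : ∀ x, 0 < x → 0 ≤ L x) (hg0 : ∀ n, ν ≤ n → 0 < g n)
    (hg : Tendsto (fun n : ℕ => n * g n) atTop (𝓝 Ω))
    (hint : Integrable (fun y => L (Ω / y)) (gammaMeasure ν 1))
    (hsum : ∀ p ∈ Ioo (0 : ℝ) 1, Summable fun m => negBinomPMF ν p (m + ν) * L (g (m + ν) / p))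
    (hle : ∀ p ∈ Ioo (0 : ℝ) 1, risk ν L g p ≤ ∫ y, L (Ω / y) ∂gammaMeasure ν 1) :
    Tendsto (risk ν L g) (𝓝[>] 0) (𝓝 (∫ y, L (Ω / y) ∂gammaMeasure ν 1)) := by
  have hIoo : Ioo (0 : ℝ) 1 ∈ 𝓝[>] 0 := Ioo_mem_nhdsGT one_pos
  have hlim : Tendsto (fun p => ENNReal.ofReal (risk ν L g p)) (𝓝[>] 0)
      (𝓝 (ENNReal.ofReal (∫ y, L (Ω / y) ∂gammaMeasure ν 1))) :=
    tendsto_of_le_liminf_of_limsup_le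
      (ofReal_integral_le_liminf_risk hν hΩ hL hL0 hg0 hg hint hsum)
      (limsup_le_of_le
        (h := eventually_of_mem hIoo fun p hp => ENNReal.ofReal_le_ofReal (hle p hp)))
  have hI0 : 0 ≤ ∫ y, L (Ω / y) ∂gammaMeasure ν 1 :=
    integral_nonneg_of_ae ((ae_pos_gammaMeasure ν 1).mono fun y hy => hL0 _ (div_pos hΩ hy))
  have hreal := (ENNReal.tendsto_toReal ENNReal.ofReal_ne_top).comp hlim
  rw [ENNReal.toReal_ofReal hI0] at hreal
  refine hreal.congr' (eventually_of_mem hIoo fun p hp => ENNReal.toReal_ofReal ?_)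
  rw [risk_eq_tsum_add]
  exact tsum_nonneg fun m => mul_nonneg (negBinomPMF_nonneg hp _ _)
    (hL0 _ (div_pos (hg0 _ (Nat.le_add_left ν m)) hp.1))

end Limit

section Estimator

variable {ν : ℕ} {a b Ω d p : ℝ}

lemma natCast_add_pos {n : ℕ} (hn : 2 ≤ n) (hd : -1 ≤ d) : (0 : ℝ) < n + d := by
  have : (2 : ℝ) ≤ n := by exact_mod_cast hn
  linarith

lemma invLinLoss_div_add_nonneg (ha : 0 ≤ a) (hb : 0 ≤ b) (hΩ : 0 < Ω) (hd : -1 ≤ d) (hp : 0 < p)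
    {n : ℕ} (hn : 2 ≤ n) : 0 ≤ invLinLoss a b (Ω / (n + d) / p) :=
  invLinLoss_nonneg ha hb (div_pos (div_pos hΩ (natCast_add_pos hn hd)) hp)

lemma invLinLoss_div_add_lt_integral (ha : 0 ≤ a) (hb : 0 ≤ b) (hab : 0 < a + b) (hΩ : 0 < Ω)
    (hd : d ∈ Icc (-1) 0) (hp : 0 < p) {n : ℕ} (hn : 2 ≤ n) :
    invLinLoss a b (Ω / (n + d) / p) < ∫ y, invLinLoss a b (Ω / y) ∂gammaMeasure n p⁻¹ := by
  rw [div_div]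
  refine invLinLoss_div_lt_integral_gammaMeasure ha hb hab hΩ (by exact_mod_cast hn)
    (inv_pos.2 hp) ⟨?_, ?_⟩
  · rw [div_inv_eq_mul]
    gcongr
    linarith [hd.1]
  · rw [div_inv_eq_mul]
    gcongr
    linarith [hd.2]

lemma summable_negBinomPMF_mul_invLinLoss (hν : 2 ≤ ν) (ha : 0 ≤ a) (hb : 0 ≤ b)
    (hab : 0 < a + b) (hΩ : 0 < Ω) (hd : d ∈ Icc (-1) 0) (hp : p ∈ Ioo (0 : ℝ) 1) :
    Summable fun m => negBinomPMF ν p (m + ν) * invLinLoss a b (Ω / ((m + ν : ℕ) + d) / p) := by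
  refine summable_negBinomPMF_mul (g := fun n => Ω / (n + d))
    (f := fun y => invLinLoss a b (Ω / y)) (by omega) hp (inv_pos.2 hp.1) ?_
    (fun n hn => invLinLoss_div_add_nonneg ha hb hΩ hd.1 hp.1 (hν.trans hn))
    fun n hn => (invLinLoss_div_add_lt_integral ha hb hab hΩ hd hp.1 (hν.trans hn)).le
  rw [mul_inv_cancel₀ hp.1.ne']
  exact integrable_invLinLoss_div_gammaMeasure ha hb hΩ (by exact_mod_cast hν) one_pos

lemma risk_invLinLoss_lt_integral (hν : 2 ≤ ν) (ha : 0 ≤ a) (hb : 0 ≤ b) (hab : 0 < a + b)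
    (hΩ : 0 < Ω) (hd : d ∈ Icc (-1) 0) (hp : p ∈ Ioo (0 : ℝ) 1) :
    risk ν (invLinLoss a b) (fun n => Ω / (n + d)) p <
      ∫ y, invLinLoss a b (Ω / y) ∂gammaMeasure ν 1 := by
  have hrate : p * p⁻¹ = 1 := mul_inv_cancel₀ hp.1.ne'
  have hint : Integrable (fun y => invLinLoss a b (Ω / y)) (gammaMeasure ν (p * p⁻¹)) := by
    rw [hrate]
    exact integrable_invLinLoss_div_gammaMeasure ha hb hΩ (by exact_mod_cast hν) one_pos
  exact hrate ▸ risk_lt_integral (by omega) hp (inv_pos.2 hp.1) hint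
    (fun n hn => invLinLoss_div_add_nonneg ha hb hΩ hd.1 hp.1 (hν.trans hn))
    fun n hn => invLinLoss_div_add_lt_integral ha hb hab hΩ hd hp.1 (hν.trans hn)

lemma tendsto_risk_invLinLoss (hν : 2 ≤ ν) (ha : 0 ≤ a) (hb : 0 ≤ b) (hab : 0 < a + b)
    (hΩ : 0 < Ω) (hd : d ∈ Icc (-1) 0) :
    Tendsto (risk ν (invLinLoss a b) fun n => Ω / (n + d)) (𝓝[>] 0)
      (𝓝 (∫ y, invLinLoss a b (Ω / y) ∂gammaMeasure ν 1)) := by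
  have hg : Tendsto (fun n : ℕ => n * (Ω / (n + d))) atTop (𝓝 Ω) := by
    simpa [mul_div_left_comm] using (tendsto_natCast_div_add_atTop d).const_mul Ω
  exact tendsto_risk (by omega) hΩ (continuousOn_invLinLoss ha hb)
    (fun x hx => invLinLoss_nonneg ha hb hx)
    (fun n hn => div_pos hΩ (natCast_add_pos (hν.trans hn) hd.1)) hg
    (integrable_invLinLoss_div_gammaMeasure ha hb hΩ (by exact_mod_cast hν) one_pos)
    (fun p hp => summable_negBinomPMF_mul_invLinLoss hν ha hb hab hΩ hd hp)
    fun p hp => (risk_invLinLoss_lt_integral hν ha hb hab hΩ hd hp).le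

end Estimator

section OmegaIL

variable {ν : ℕ} {a b : ℝ}

lemma sub_one_le_omegaIL (hν : 1 ≤ ν) (a b : ℝ) : (ν : ℝ) - 1 ≤ OmegaIL ν a b := by
  have hν1 : (0 : ℝ) ≤ ν - 1 := sub_nonneg.2 (by exact_mod_cast hν)
  unfold OmegaIL
  split_ifs with h h'
  · obtain ⟨ha, hb⟩ := h
    have hsqrt : 0 ≤ √(1 + 4 * a * b / (((ν : ℝ) - 1) * (a + b) ^ 2)) - 1 :=
      sub_nonneg.2 (one_le_sqrt.2 (le_add_of_nonneg_right (by positivity)))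
    exact le_mul_of_one_le_right hν1 (le_add_of_nonneg_right (by positivity))
  · exact le_rfl
  · linarith

lemma omegaIL_pos (hν : 2 ≤ ν) (a b : ℝ) : 0 < OmegaIL ν a b :=
  (sub_pos.2 (by exact_mod_cast hν)).trans_le (sub_one_le_omegaIL (by omega) a b)

lemma omegaIL_balance (hν : 2 ≤ ν) (ha : 0 ≤ a) (hb : 0 ≤ b) :
    a * (ν / OmegaIL ν a b - 1) = b * (OmegaIL ν a b / (ν - 1) - 1) := by
  have hν1 : (0 : ℝ) < ν - 1 := sub_pos.2 (by exact_mod_cast hν)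
  have hΩ := omegaIL_pos hν a b
  suffices hquad : a * (OmegaIL ν a b - ν) * (ν - 1) +
      b * OmegaIL ν a b * (OmegaIL ν a b - (ν - 1)) = 0 by
    field_simp
    linear_combination -hquad
  unfold OmegaIL
  split_ifs with h h'
  · obtain ⟨ha, hb⟩ := h
    have hsq := sq_sqrt (by positivity : 0 ≤ 1 + 4 * a * b / (((ν : ℝ) - 1) * (a + b) ^ 2))
    field_simp at hsq ⊢
    linear_combination ((ν : ℝ) - 1) * hsq
  · rw [h']
    ring
  · have hb0 : b = 0 := by
      by_contra hne
      exact h ⟨ha.lt_of_ne' h', hb.lt_of_ne' hne⟩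
    rw [hb0]
    ring

lemma integral_invLinLoss_omegaIL_div (hν : 2 ≤ ν) (ha : 0 ≤ a) (hb : 0 ≤ b) :
    ∫ y, invLinLoss a b (OmegaIL ν a b / y) ∂gammaMeasure ν 1 =
      a * (ν / OmegaIL ν a b - 1) +
        (a * ν / OmegaIL ν a b + b) * OmegaIL ν a b ^ (ν - 1) * exp (-OmegaIL ν a b) /
          (ν - 1).factorial := by
  have hΩ := omegaIL_pos hν a b
  rw [integral_invLinLoss_div_gammaMeasure ha hb hΩ (by exact_mod_cast hν)
      (omegaIL_balance hν ha hb),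
    gammaPDFReal_natCast (by omega) hΩ.le, one_pow, one_mul]
  ring

end OmegaIL

theorem stmt1_general (ν : ℕ) (hν : 2 ≤ ν) (a b : ℝ) (ha : 0 ≤ a) (hb : 0 ≤ b)
    (hab : (a, b) ≠ (0, 0)) (d : ℝ) (hd : d ∈ Icc (-1) 0) :
    (∀ p ∈ Ioo (0 : ℝ) 1, risk ν (invLinLoss a b) (fun n => OmegaIL ν a b / (n + d)) p <
      a * (ν / OmegaIL ν a b - 1) +
        (a * ν / OmegaIL ν a b + b) * OmegaIL ν a b ^ (ν - 1) * exp (-OmegaIL ν a b) /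
          (ν - 1).factorial) ∧
    Tendsto (risk ν (invLinLoss a b) fun n => OmegaIL ν a b / (n + d)) (𝓝[>] 0)
      (𝓝 (a * (ν / OmegaIL ν a b - 1) +
        (a * ν / OmegaIL ν a b + b) * OmegaIL ν a b ^ (ν - 1) * exp (-OmegaIL ν a b) /
          (ν - 1).factorial)) := by
  have hΩ := omegaIL_pos hν a b
  have hab' : 0 < a + b := (add_nonneg ha hb).lt_of_ne' fun h =>
    hab (Prod.ext ((add_eq_zero_iff_of_nonneg ha hb).1 h).1
      ((add_eq_zero_iff_of_nonneg ha hb).1 h).2)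
  rw [← integral_invLinLoss_omegaIL_div hν ha hb]
  exact ⟨fun p hp => risk_invLinLoss_lt_integral hν ha hb hab' hΩ hd hp,
    tendsto_risk_invLinLoss hν ha hb hab' hΩ hd⟩

theorem stmt1 (ν : ℕ) (hν : 2 ≤ ν) (a b : ℝ) (ha : 0 ≤ a) (hb : 0 ≤ b)
    (hab : (a, b) ≠ (0, 0)) (d : ℝ) (hd : d ∈ Set.Icc (OmegaIL ν a b - ν) 0) :
    (∀ p ∈ Set.Ioo (0 : ℝ) 1,
        risk ν (invLinLoss a b) (fun n => OmegaIL ν a b / ((n : ℝ) + d)) p <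
          a * ((ν : ℝ) / OmegaIL ν a b - 1) +
            (a * (ν : ℝ) / OmegaIL ν a b + b) * (OmegaIL ν a b) ^ (ν - 1) *
              Real.exp (-(OmegaIL ν a b)) / (Nat.factorial (ν - 1))) ∧
      Filter.Tendsto (risk ν (invLinLoss a b) (fun n => OmegaIL ν a b / ((n : ℝ) + d)))
        (nhdsWithin 0 (Set.Ioi 0))
        (nhds (a * ((ν : ℝ) / OmegaIL ν a b - 1) +
          (a * (ν : ℝ) / OmegaIL ν a b + b) * (OmegaIL ν a b) ^ (ν - 1) *
            Real.exp (-(OmegaIL ν a b)) / (Nat.factorial (ν - 1)))) :=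
  stmt1_general ν hν a b ha hb hab d
    ⟨by linarith [hd.1, sub_one_le_omegaIL (one_le_two.trans hν) a b], hd.2⟩
end

section
/- Let ν ≥ 2 be an integer, p ∈ (0,1), and let L be the normalized linear-linear loss with parameters a, b ≥ 0, (a,b) ≠ (0,0). For the estimator p̂ = (ν−1)/(N−1) and m₀ = ⌊(ν−1)/p + 1⌋, the risk satisfies the identity R(p) = (a+b)(1−p) C(m₀−1, ν−1) p^{ν−1} (1−p)^{m₀−ν}. -/
/-!
Write `f` for the probability function of `N`. The ratio of consecutive values of `f` gives
`f (n + 1) * (1 - x) = (1 - p) / p * (f n - f (n + 1))`, where `x = (ν - 1) / (n * p)` is the ratio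
of estimate to true value at `N = n + 1`. Hence `f` increases while `x ≥ 1`, that is up to its mode
`m₀`, and decreases afterwards. The risk is therefore `(1 - p) / p` times `b` times the total
rise of `f` plus `a` times its total fall, and both are equal to `f m₀`.
-/

open Real Filter Set

/-- Normalized linear-linear loss. -/
noncomputable def linLinLoss (a b x : ℝ) : ℝ :=
  if x ≤ 1 then a * (1 - x) else b * (x - 1)

lemma hasSum_sub_succ {G : Type*} [AddCommGroup G] [TopologicalSpace G] [IsTopologicalAddGroup G]
    {u : ℕ → G} (hu : Summable u) : HasSum (fun n => u n - u (n + 1)) (u 0) := by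
  simpa using hu.hasSum.sub ((hasSum_nat_add_iff' 1).mpr hu.hasSum)

lemma hasSum_weighted_rise_fall {R : Type*} [Ring R] [TopologicalSpace R] [IsTopologicalRing R]
    {u t : ℕ → R} (hu : Summable u) (hu₀ : u 0 = 0) (a b : R) (m : ℕ)
    (hrise : ∀ n < m, t n = b * (u (n + 1) - u n))
    (hfall : ∀ n, m ≤ n → t n = a * (u n - u (n + 1))) :
    HasSum t ((a + b) * u m) := by
  have hhead : ∑ n ∈ Finset.range m, t n = b * u m := by
    rw [Finset.sum_congr rfl fun n hn => hrise n (Finset.mem_range.mp hn), ← Finset.mul_sum,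
      Finset.sum_range_sub, hu₀, sub_zero]
  have htail : HasSum (fun n => t (n + m)) (a * u m) := by
    have hu' : Summable fun n => u (n + m) := (summable_nat_add_iff m).mpr hu
    have h := (hasSum_sub_succ hu').mul_left a
    rw [zero_add] at h
    refine h.congr_fun fun n => ?_
    rw [hfall (n + m) (Nat.le_add_left m n), Nat.add_right_comm]
  rw [add_mul, ← hhead]
  exact (hasSum_nat_add_iff m).mp htail

section NegativeBinomial

variable {ν : ℕ} {p : ℝ}

lemma negBinomPMF_eq_zero_of_lt (hν : 2 ≤ ν) (p : ℝ) {n : ℕ} (hn : n < ν) :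
    negBinomPMF ν p n = 0 := by
  simp [negBinomPMF, Nat.choose_eq_zero_of_lt (show n - 1 < ν - 1 by omega)]

lemma summable_negBinomPMF (hν : 1 ≤ ν) (hp : ‖1 - p‖ < 1) : Summable (negBinomPMF ν p) := by
  rw [← summable_nat_add_iff ν]
  refine ((summable_choose_mul_geometric_of_norm_lt_one (ν - 1) hp).mul_left (p ^ ν)).congr
    fun n => ?_
  rw [negBinomPMF, Nat.add_sub_assoc hν, Nat.add_sub_cancel]
  ring

lemma negBinomPMF_succ_recurrence (hν : 2 ≤ ν) (p : ℝ) (n : ℕ) :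
    ((n : ℝ) + 1 - ν) * negBinomPMF ν p (n + 1) = n * (1 - p) * negBinomPMF ν p n := by
  rcases lt_trichotomy (n + 1) ν with hlt | rfl | hgt
  · rw [negBinomPMF_eq_zero_of_lt hν p hlt,
      negBinomPMF_eq_zero_of_lt hν p (n.lt_succ_self.trans hlt), mul_zero, mul_zero]
  · rw [negBinomPMF_eq_zero_of_lt hν p n.lt_succ_self]
    push_cast
    ring
  · obtain ⟨k, rfl⟩ := Nat.exists_eq_add_of_le' (one_le_two.trans hν)
    obtain ⟨j, rfl⟩ := Nat.exists_eq_add_of_lt (Nat.lt_of_succ_lt_succ hgt)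
    have hchoose : ((k + j).choose k : ℝ) * (k + j + 1) = (k + j + 1).choose k * (j + 1) := by
      have h := Nat.choose_mul_succ_eq (k + j) k
      rw [show k + j + 1 - k = j + 1 by omega] at h
      exact_mod_cast h
    simp only [negBinomPMF, Nat.add_sub_cancel, show k + j + 1 + 1 - (k + 1) = j + 1 by omega,
      show k + j + 1 - (k + 1) = j by omega]
    push_cast
    linear_combination (-(p ^ (k + 1) * (1 - p) ^ (j + 1))) * hchoose

/-- At `n = 0`, where `(ν - 1) / n` is a junk value, both values of the probability function
vanish. -/
lemma negBinomPMF_succ_mul_one_sub (hν : 2 ≤ ν) (hp : p ≠ 0) (n : ℕ) :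
    negBinomPMF ν p (n + 1) * (1 - ((ν : ℝ) - 1) / n / p) =
      (1 - p) / p * (negBinomPMF ν p n - negBinomPMF ν p (n + 1)) := by
  rcases n.eq_zero_or_pos with rfl | hn
  · rw [negBinomPMF_eq_zero_of_lt hν p (by omega), negBinomPMF_eq_zero_of_lt hν p (by omega)]
    ring
  · have hn' : (n : ℝ) ≠ 0 := by positivity
    field_simp
    linear_combination negBinomPMF_succ_recurrence hν p n

end NegativeBinomial

section LinLinLoss

variable {x : ℝ} (a b : ℝ)

lemma linLinLoss_of_le_one (hx : x ≤ 1) : linLinLoss a b x = a * (1 - x) :=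
  if_pos hx

lemma linLinLoss_of_one_le (hx : 1 ≤ x) : linLinLoss a b x = b * (x - 1) := by
  rcases hx.eq_or_lt with rfl | hx
  · simp [linLinLoss]
  · exact if_neg hx.not_ge

end LinLinLoss

section Risk

variable {ν : ℕ} {p : ℝ}

lemma risk_eq_tsum_succ (hν : 2 ≤ ν) (L : ℝ → ℝ) (g : ℕ → ℝ) (p : ℝ) :
    risk ν L g p = ∑' n : ℕ, negBinomPMF ν p (n + 1) * L (g (n + 1) / p) := by
  have hdrop : ∀ n, (if ν ≤ n then negBinomPMF ν p n * L (g n / p) else 0) =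
      negBinomPMF ν p n * L (g n / p) := fun n => by
    split_ifs with hn
    · rfl
    · rw [negBinomPMF_eq_zero_of_lt hν p (not_le.mp hn), zero_mul]
  rw [risk, tsum_congr hdrop]
  refine (Nat.succ_injective.tsum_eq fun n hn => ?_).symm
  rcases n with _ | n
  · simp [negBinomPMF_eq_zero_of_lt hν p (show 0 < ν by omega)] at hn
  · exact ⟨n, rfl⟩

lemma succ_le_floor_div_add_one_iff {c : ℝ} (hc : 0 ≤ c) (hp : 0 < p) (n : ℕ) :
    n + 1 ≤ ⌊c / p + 1⌋₊ ↔ n * p ≤ c := by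
  rw [Nat.floor_add_one (by positivity), add_le_add_iff_right, Nat.le_floor_iff (by positivity),
    le_div_iff₀ hp]

lemma hasSum_negBinomPMF_mul_linLinLoss (hν : 2 ≤ ν) (a b : ℝ) (hp : p ∈ Ioc (0 : ℝ) 1) :
    HasSum (fun n : ℕ => negBinomPMF ν p (n + 1) * linLinLoss a b (((ν : ℝ) - 1) / n / p))
      ((a + b) * ((1 - p) / p * negBinomPMF ν p ⌊((ν : ℝ) - 1) / p + 1⌋₊)) := by
  have hp₀ : 0 < p := hp.1
  have hν₁ : (0 : ℝ) ≤ ν - 1 := by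
    rw [sub_nonneg]
    exact_mod_cast one_le_two.trans hν
  have hq : ‖1 - p‖ < 1 := by
    rw [Real.norm_eq_abs, abs_lt]
    constructor <;> linarith [hp.1, hp.2]
  have hsum := (summable_negBinomPMF (one_le_two.trans hν) hq).mul_left ((1 - p) / p)
  have hzero := negBinomPMF_eq_zero_of_lt hν p (show 0 < ν by omega)
  refine hasSum_weighted_rise_fall hsum (by rw [hzero, mul_zero]) a b _
    (fun n hn => ?rise) fun n hn => ?fall
  case rise =>
    rcases n.eq_zero_or_pos with rfl | hn₀
    · simp [hzero, negBinomPMF_eq_zero_of_lt hν p (show 0 + 1 < ν by omega)]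
    · have hx : 1 ≤ ((ν : ℝ) - 1) / n / p := by
        rw [div_div, one_le_div (by positivity)]
        exact (succ_le_floor_div_add_one_iff hν₁ hp₀ n).mp hn
      rw [linLinLoss_of_one_le a b hx]
      linear_combination (-b) * negBinomPMF_succ_mul_one_sub hν hp₀.ne' n
  case fall =>
    have hx : ((ν : ℝ) - 1) / n / p ≤ 1 := by
      have h := mt (succ_le_floor_div_add_one_iff hν₁ hp₀ n).mpr (by omega)
      rw [div_div]
      exact div_le_one_of_le₀ (not_le.mp h).le (by positivity)
    rw [linLinLoss_of_le_one a b hx]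
    linear_combination a * negBinomPMF_succ_mul_one_sub hν hp₀.ne' n

end Risk

/-- For `(a, b) = (1, -1)` the identity says that the estimator is unbiased. -/
theorem stmt4_general (ν : ℕ) (hν : 2 ≤ ν) (a b p : ℝ) (hp : p ∈ Ioc (0 : ℝ) 1)
    (m₀ : ℕ) (hm₀ : m₀ = Nat.floor (((ν : ℝ) - 1) / p + 1)) :
    risk ν (linLinLoss a b) (fun n => ((ν : ℝ) - 1) / ((n : ℝ) - 1)) p =
      (a + b) * (1 - p) * (Nat.choose (m₀ - 1) (ν - 1) : ℝ) * p ^ (ν - 1) *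
        (1 - p) ^ (m₀ - ν) := by
  have hp₀ : p ≠ 0 := hp.1.ne'
  have hpow : p ^ ν = p ^ (ν - 1) * p := (pow_sub_one_mul (by omega) p).symm
  rw [risk_eq_tsum_succ hν]
  simp only [Nat.cast_add_one, add_sub_cancel_right]
  rw [(hasSum_negBinomPMF_mul_linLinLoss hν a b hp).tsum_eq, ← hm₀, negBinomPMF, hpow]
  field_simp

theorem stmt4 (ν : ℕ) (hν : 2 ≤ ν) (a b : ℝ) (ha : 0 ≤ a) (hb : 0 ≤ b)
    (hab : (a, b) ≠ (0, 0)) (p : ℝ) (hp : p ∈ Set.Ioo (0 : ℝ) 1)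
    (m₀ : ℕ) (hm₀ : m₀ = Nat.floor (((ν : ℝ) - 1) / p + 1)) :
    risk ν (linLinLoss a b) (fun n => ((ν : ℝ) - 1) / ((n : ℝ) - 1)) p =
      (a + b) * (1 - p) * (Nat.choose (m₀ - 1) (ν - 1) : ℝ) * p ^ (ν - 1) *
        (1 - p) ^ (m₀ - ν) :=
  stmt4_general ν hν a b p (Ioo_subset_Ioc_self hp) m₀ hm₀
end

section
/- Let ν ≥ 2 be an integer, let L be the normalized linear-linear loss with parameters a, b ≥ 0, (a,b) ≠ (0,0), and consider the estimator p̂ = Ω/(N+d) with Ω > 0 and d > −ν. Then lim_{p→0⁺} R(p) = (a+b)Ω γ(ν−1, Ω)/(ν−1) − (a+b) γ(ν, Ω) + a(1 − Ω/(ν−1)). -/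
/-!
Smear the mass of each `n` uniformly over an interval of length `p`: with `n = ⌊x / p⌋ + ν`, the
risk is the integral over `x > 0` of `negBinomDensity ν p x * L (g n / p)`. As `p → 0⁺` this
density tends to the Gamma density `x ^ (ν - 1) * exp (-x) / (ν - 1)!`, and if `n * g n → Ω`
then `g n / p = (n * g n) / (p * n)` tends to `Ω / x`.

The limit passes under the integral by dominated convergence. The argument `g n / p` of the loss
blows up like `1 / x` near `x = 0`, but the density contains the factor `(p * n) ^ (ν - 1)`,
which absorbs a loss growing at most like the `(ν - 1)`-th power. For the linear-linear loss,
the identity `L y = a * (1 - y) + (a + b) * max (y - 1) 0` splits the limit into a complete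
Gamma integral and one truncated at `Ω`.
-/

open Real Filter Set

/-- Normalized lower incomplete gamma function. -/
noncomputable def lowerGamma (t u : ℝ) : ℝ :=
  (∫ s in (0:ℝ)..u, s ^ (t - 1) * Real.exp (-s)) / Real.Gamma t

open MeasureTheory Topology Asymptotics Polynomial

section FloorDiv

variable {p x : ℝ}

lemma mul_floor_div_le (hp : 0 < p) (hx : 0 ≤ x) : p * ⌊x / p⌋₊ ≤ x := by
  rw [← le_div_iff₀' hp]
  exact Nat.floor_le (by positivity)

lemma lt_mul_floor_div_add_one (hp : 0 < p) : x < p * (⌊x / p⌋₊ + 1) := by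
  rw [← div_lt_iff₀' hp]
  exact Nat.lt_floor_add_one (x / p)

lemma Ici_inter_preimage_floor_div (hp : 0 < p) (m : ℕ) :
    Ici 0 ∩ (fun x : ℝ => ⌊x / p⌋₊) ⁻¹' {m} = Ico (p * m) (p * (m + 1)) := by
  ext x
  simp only [mem_inter_iff, mem_Ici, mem_preimage, mem_singleton_iff, mem_Ico]
  constructor
  · rintro ⟨hx, rfl⟩
    exact ⟨mul_floor_div_le hp hx, lt_mul_floor_div_add_one hp⟩
  · rintro ⟨hle, hlt⟩
    have hx : 0 ≤ x := hle.trans' (by positivity)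
    exact ⟨hx, (Nat.floor_eq_iff (by positivity)).2
      ⟨(le_div_iff₀' hp).2 hle, (div_lt_iff₀' hp).2 hlt⟩⟩

lemma integral_comp_floor_div {E : Type*} [NormedAddCommGroup E] [NormedSpace ℝ E]
    [FiniteDimensional ℝ E] (hp : 0 < p) (f : ℕ → E) :
    ∫ x in Ioi (0 : ℝ), f ⌊x / p⌋₊ = ∑' m, p • f m := by
  have hfloor : Measurable fun x : ℝ => ⌊x / p⌋₊ := by fun_prop
  have hmass (m : ℕ) : (volume.restrict (Ici 0)).map (fun x : ℝ => ⌊x / p⌋₊) {m} =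
      ENNReal.ofReal p := by
    rw [Measure.map_apply hfloor (measurableSet_singleton m),
      Measure.restrict_apply (hfloor (measurableSet_singleton m)), inter_comm,
      Ici_inter_preimage_floor_div hp, Real.volume_Ico]
    ring_nf
  rw [← integral_Ici_eq_integral_Ioi,
    ← integral_map hfloor.aemeasurable StronglyMeasurable.of_discrete.aestronglyMeasurable,
    ← Measure.sum_smul_dirac (Measure.map _ _), integral_sum_dirac fun m => by simp [hmass]]
  simp only [hmass, ENNReal.toReal_ofReal hp.le]

lemma tendsto_mul_floor_div_add (hx : 0 ≤ x) (c : ℕ) :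
    Tendsto (fun p : ℝ => p * ((⌊x / p⌋₊ + c : ℕ) : ℝ)) (𝓝[>] 0) (𝓝 x) := by
  have hfloor : Tendsto (fun p : ℝ => p * (⌊x / p⌋₊ : ℝ)) (𝓝[>] 0) (𝓝 x) :=
    ((tendsto_nat_floor_mul_div_atTop hx).comp tendsto_inv_nhdsGT_zero).congr fun p => by
      simp [div_eq_mul_inv, mul_comm]
  have hshift : Tendsto (fun p : ℝ => p * (c : ℝ)) (𝓝[>] 0) (𝓝 0) := by
    simpa using (tendsto_id.mono_left (nhdsWithin_le_nhds (a := (0 : ℝ)))).mul_const (c : ℝ)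
  simpa [mul_add] using hfloor.add hshift

lemma tendsto_floor_div_add_atTop (hx : 0 < x) (c : ℕ) :
    Tendsto (fun p : ℝ => ⌊x / p⌋₊ + c) (𝓝[>] 0) atTop :=
  tendsto_atTop_mono (fun _ => Nat.le_add_right _ c) <|
    tendsto_nat_floor_atTop.comp (tendsto_inv_nhdsGT_zero.const_mul_atTop hx)

end FloorDiv

lemma tendsto_choose_mul_pow {ι : Type*} {l : Filter ι} {n : ι → ℕ} {p : ι → ℝ} {x : ℝ}
    (hn : Tendsto n l atTop) (hpn : Tendsto (fun i => p i * n i) l (𝓝 x)) (k : ℕ) :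
    Tendsto (fun i => ((n i).choose k : ℝ) * p i ^ k) l (𝓝 (x ^ k / k.factorial)) := by
  have hequiv : (fun i => ((n i).choose k : ℝ) * p i ^ k) ~[l]
      fun i => (p i * n i) ^ k / k.factorial :=
    (((isEquivalent_choose k).comp_tendsto hn).mul IsEquivalent.refl).congr_right <|
      .of_eq <| by ext i; simp only [Function.comp_apply, Pi.mul_apply]; ring
  exact hequiv.tendsto_nhds_iff.2 ((hpn.pow k).div_const _)

lemma tendsto_one_sub_pow {m : ℝ → ℕ} {x : ℝ}
    (hm : Tendsto (fun p => p * m p) (𝓝[>] 0) (𝓝 x)) :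
    Tendsto (fun p => (1 - p) ^ m p) (𝓝[>] 0) (𝓝 (exp (-x))) := by
  have hbase : Tendsto (fun p : ℝ => (1 - p) ^ p⁻¹) (𝓝[>] 0) (𝓝 (exp (-1))) :=
    ((tendsto_one_add_div_rpow_exp (-1)).comp tendsto_inv_nhdsGT_zero).congr fun p => by
      simp [sub_eq_add_neg]
  have hpow := hbase.rpow hm (.inl (exp_ne_zero _))
  rw [← exp_mul, neg_one_mul] at hpow
  refine hpow.congr' ?_
  filter_upwards [Ioo_mem_nhdsGT one_pos] with p hp
  rw [← rpow_mul (by linarith [hp.2]), inv_mul_cancel_left₀ hp.1.ne', rpow_natCast]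

lemma one_sub_pow_floor_div_le {p x : ℝ} (hp0 : 0 < p) (hp1 : p ≤ 1) :
    (1 - p) ^ ⌊x / p⌋₊ ≤ exp (1 - x) :=
  calc (1 - p) ^ ⌊x / p⌋₊ ≤ exp (-p) ^ ⌊x / p⌋₊ :=
        pow_le_pow_left₀ (by linarith) (one_sub_le_exp_neg p) _
    _ = exp (-(p * ⌊x / p⌋₊)) := by rw [← exp_nat_mul]; ring_nf
    _ ≤ exp (1 - x) := exp_le_exp.2 (by linarith [lt_mul_floor_div_add_one (x := x) hp0])

/-- The density of `p * (N - ν + U)`, where `N` is negative binomial and `U` is uniform on `[0, 1)`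
and independent of `N`: the mass `negBinomPMF ν p (m + ν)` is spread over `[p * m, p * (m + 1))`.
It turns the risk into an integral over a domain that does not depend on `p`. Only `0 ≤ x` is
meaningful, since `⌊x / p⌋₊ = 0` for negative `x`. -/
noncomputable def negBinomDensity (ν : ℕ) (p x : ℝ) : ℝ :=
  negBinomPMF ν p (⌊x / p⌋₊ + ν) / p

section NegBinomDensity

variable {ν : ℕ} {p x : ℝ}

lemma negBinomDensity_eq (hν : 0 < ν) (hp : p ≠ 0) :
    negBinomDensity ν p x =
      ((⌊x / p⌋₊ + (ν - 1)).choose (ν - 1) : ℝ) * p ^ (ν - 1) * (1 - p) ^ ⌊x / p⌋₊ := by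
  rw [negBinomDensity, negBinomPMF, Nat.add_sub_cancel, Nat.add_sub_assoc hν,
    ← pow_sub_one_mul hν.ne' p]
  field_simp

lemma negBinomDensity_nonneg (hp0 : 0 < p) (hp1 : p ≤ 1) : 0 ≤ negBinomDensity ν p x := by
  have : 0 ≤ 1 - p := sub_nonneg.2 hp1
  unfold negBinomDensity negBinomPMF
  positivity

lemma negBinomDensity_le (hν : 0 < ν) (hp0 : 0 < p) (hp1 : p ≤ 1) :
    negBinomDensity ν p x ≤ (p * (⌊x / p⌋₊ + ν : ℕ)) ^ (ν - 1) * exp (1 - x) := by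
  have hchoose : ((⌊x / p⌋₊ + (ν - 1)).choose (ν - 1) : ℝ) ≤ (⌊x / p⌋₊ + ν : ℕ) ^ (ν - 1) := by
    exact_mod_cast (Nat.choose_le_pow _ _).trans (Nat.pow_le_pow_left (by omega) _)
  have : 0 ≤ 1 - p := sub_nonneg.2 hp1
  rw [negBinomDensity_eq hν hp0.ne', mul_pow, mul_comm (p ^ _)]
  gcongr
  exact one_sub_pow_floor_div_le hp0 hp1

lemma tendsto_negBinomDensity (hν : 0 < ν) (hx : 0 < x) :
    Tendsto (fun p => negBinomDensity ν p x) (𝓝[>] 0)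
      (𝓝 (x ^ (ν - 1) / (ν - 1).factorial * exp (-x))) := by
  have hchoose := tendsto_choose_mul_pow (tendsto_floor_div_add_atTop hx (ν - 1))
    (tendsto_mul_floor_div_add hx.le (ν - 1)) (ν - 1)
  have hpow := tendsto_one_sub_pow (tendsto_mul_floor_div_add hx.le 0)
  refine (hchoose.mul hpow).congr' ?_
  filter_upwards [self_mem_nhdsWithin] with p hp
  exact (negBinomDensity_eq hν hp.ne').symm

end NegBinomDensity

lemma tsum_ite_le_eq_tsum_add {M : Type*} [AddCommMonoid M] [TopologicalSpace M] (f : ℕ → M)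
    (k : ℕ) : ∑' n, (if k ≤ n then f n else 0) = ∑' m, f (m + k) := by
  rw [← (add_left_injective k).tsum_eq]
  · simp
  · intro n hn
    obtain ⟨m, rfl⟩ := Nat.exists_eq_add_of_le' (not_not.1 fun h => hn (if_neg h))
    exact mem_range_self m

section Risk

variable {ν : ℕ} {L : ℝ → ℝ} {g : ℕ → ℝ} {p x Ω C G : ℝ}

lemma risk_eq_integral_negBinomDensity (hp : 0 < p) :
    risk ν L g p =
      ∫ x in Ioi (0 : ℝ), negBinomDensity ν p x * L (g (⌊x / p⌋₊ + ν) / p) := by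
  rw [risk, tsum_ite_le_eq_tsum_add, eq_comm]
  refine (integral_comp_floor_div hp fun m =>
    negBinomPMF ν p (m + ν) / p * L (g (m + ν) / p)).trans (tsum_congr fun m => ?_)
  rw [smul_eq_mul]
  field_simp

lemma tendsto_estimator_div (hg : Tendsto (fun n : ℕ => n * g n) atTop (𝓝 Ω)) (hx : 0 < x)
    (c : ℕ) : Tendsto (fun p => g (⌊x / p⌋₊ + c) / p) (𝓝[>] 0) (𝓝 (Ω / x)) := by
  have hN := tendsto_floor_div_add_atTop hx c
  refine ((hg.comp hN).div (tendsto_mul_floor_div_add hx.le c) hx.ne').congr' ?_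
  filter_upwards [hN.eventually_ne_atTop 0] with p hp
  have : ((⌊x / p⌋₊ + c : ℕ) : ℝ) ≠ 0 := Nat.cast_ne_zero.2 hp
  simp only [Function.comp_apply, Pi.div_apply]
  field_simp

lemma nonneg_of_forall_abs_le {k : ℕ} (hL : ∀ y, |L y| ≤ C * (1 + |y| ^ k)) : 0 ≤ C :=
  nonneg_of_mul_nonneg_left ((abs_nonneg _).trans (hL 0)) (by positivity)

lemma pow_mul_abs_loss_le {k n : ℕ} (hL : ∀ y, |L y| ≤ C * (1 + |y| ^ k))
    (hG : |n * g n| ≤ G) (hn : n ≠ 0) (hp : 0 < p) :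
    (p * n) ^ k * |L (g n / p)| ≤ C * ((p * n) ^ k + G ^ k) := by
  have := nonneg_of_forall_abs_le hL
  have : (0 : ℝ) < n := by positivity
  calc (p * n) ^ k * |L (g n / p)| ≤ (p * n) ^ k * (C * (1 + |g n / p| ^ k)) := by
        gcongr; exact hL _
    _ = C * ((p * n) ^ k + |n * g n| ^ k) := by
        rw [abs_div, abs_mul, Nat.abs_cast, abs_of_pos hp, div_pow, mul_pow, mul_pow]
        field_simp
    _ ≤ C * ((p * n) ^ k + G ^ k) := by gcongr

lemma norm_negBinomDensity_mul_loss_le (hν : 0 < ν) (hL : ∀ y, |L y| ≤ C * (1 + |y| ^ (ν - 1)))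
    (hG : ∀ n : ℕ, |n * g n| ≤ G) (hp0 : 0 < p) (hp1 : p ≤ 1) (hx : 0 ≤ x) :
    ‖negBinomDensity ν p x * L (g (⌊x / p⌋₊ + ν) / p)‖ ≤
      C * ((x + ν) ^ (ν - 1) + G ^ (ν - 1)) * exp (1 - x) := by
  have := nonneg_of_forall_abs_le hL
  have hN : p * (⌊x / p⌋₊ + ν : ℕ) ≤ x + ν := by
    push_cast
    nlinarith [mul_floor_div_le hp0 hx, mul_le_of_le_one_left ν.cast_nonneg hp1]
  rw [norm_mul, norm_of_nonneg (negBinomDensity_nonneg hp0 hp1), norm_eq_abs]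
  calc negBinomDensity ν p x * |L (g (⌊x / p⌋₊ + ν) / p)|
      ≤ (p * (⌊x / p⌋₊ + ν : ℕ)) ^ (ν - 1) * exp (1 - x) * |L (g (⌊x / p⌋₊ + ν) / p)| := by
        gcongr; exact negBinomDensity_le hν hp0 hp1
    _ = (p * (⌊x / p⌋₊ + ν : ℕ)) ^ (ν - 1) * |L (g (⌊x / p⌋₊ + ν) / p)| * exp (1 - x) := by ring
    _ ≤ C * ((p * (⌊x / p⌋₊ + ν : ℕ)) ^ (ν - 1) + G ^ (ν - 1)) * exp (1 - x) :=
        mul_le_mul_of_nonneg_right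
          (pow_mul_abs_loss_le hL (hG _) (Nat.add_pos_right _ hν).ne' hp0) (exp_pos _).le
    _ ≤ C * ((x + ν) ^ (ν - 1) + G ^ (ν - 1)) * exp (1 - x) := by gcongr

end Risk

section GammaIntegrals

lemma integrableOn_pow_mul_exp_neg (k : ℕ) :
    IntegrableOn (fun x : ℝ => x ^ k * exp (-x)) (Ioi 0) := by
  simpa [mul_comm] using GammaIntegral_convergent (Nat.cast_add_one_pos (α := ℝ) k)

lemma integral_pow_mul_exp_neg (k : ℕ) :
    ∫ x in Ioi (0 : ℝ), x ^ k * exp (-x) = k.factorial := by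
  rw [← Gamma_nat_eq_factorial, Gamma_eq_integral (Nat.cast_add_one_pos k)]
  simp [mul_comm]

lemma integral_zero_pow_mul_exp_neg (k : ℕ) (u : ℝ) :
    ∫ x in (0 : ℝ)..u, x ^ k * exp (-x) = k.factorial * lowerGamma (k + 1) u := by
  simp [lowerGamma, Gamma_nat_eq_factorial, mul_div_cancel₀, Nat.factorial_ne_zero]

lemma integrableOn_eval_mul_exp_neg (P : ℝ[X]) :
    IntegrableOn (fun x => P.eval x * exp (-x)) (Ioi 0) := by
  induction P using Polynomial.induction_on' with
  | add P Q hP hQ => simpa only [eval_add, add_mul] using! hP.add hQ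
  | monomial k c =>
    simpa only [eval_monomial, mul_assoc] using! (integrableOn_pow_mul_exp_neg k).const_mul c

end GammaIntegrals

theorem tendsto_risk_s7 {ν : ℕ} (hν : 0 < ν) {L : ℝ → ℝ} {g : ℕ → ℝ} {Ω C : ℝ}
    (hcont : ∀ᵐ x ∂volume.restrict (Ioi 0), ContinuousAt L (Ω / x))
    (hL : ∀ y, |L y| ≤ C * (1 + |y| ^ (ν - 1)))
    (hg : Tendsto (fun n : ℕ => n * g n) atTop (𝓝 Ω)) :
    Tendsto (risk ν L g) (𝓝[>] 0) (𝓝 (∫ x in Ioi (0 : ℝ),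
      x ^ (ν - 1) / (ν - 1).factorial * exp (-x) * L (Ω / x))) := by
  obtain ⟨G, hG⟩ := (Metric.isBounded_range_of_tendsto _ hg).exists_norm_le
  have hmajorant : IntegrableOn
      (fun x : ℝ => C * ((x + ν) ^ (ν - 1) + G ^ (ν - 1)) * exp (1 - x)) (Ioi 0) := by
    refine (integrableOn_eval_mul_exp_neg
      (.C (C * exp 1) * ((X + .C (ν : ℝ)) ^ (ν - 1) + .C (G ^ (ν - 1))))).congr_fun
      (fun x _ => ?_) measurableSet_Ioi
    simp only [eval_mul, eval_add, eval_pow, eval_C, eval_X, sub_eq_add_neg, exp_add]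
    ring
  refine Tendsto.congr' (f₁ := fun p => ∫ x in Ioi (0 : ℝ),
    negBinomDensity ν p x * L (g (⌊x / p⌋₊ + ν) / p)) ?_
    (tendsto_integral_filter_of_dominated_convergence _ ?_ ?_ hmajorant ?_)
  · filter_upwards [self_mem_nhdsWithin] with p hp
    exact (risk_eq_integral_negBinomDensity hp).symm
  · refine .of_forall fun p => Measurable.aestronglyMeasurable ?_
    exact (measurable_of_countable fun m : ℕ =>
      negBinomPMF ν p (m + ν) / p * L (g (m + ν) / p)).comp (by fun_prop)
  · filter_upwards [Ioo_mem_nhdsGT one_pos] with p hp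
    filter_upwards [ae_restrict_mem measurableSet_Ioi] with x hx
    exact norm_negBinomDensity_mul_loss_le hν hL (fun n => hG _ (mem_range_self n)) hp.1 hp.2.le
      (le_of_lt hx)
  · filter_upwards [ae_restrict_mem measurableSet_Ioi, hcont] with x hx hcontx
    exact (tendsto_negBinomDensity hν hx).mul (hcontx.tendsto.comp (tendsto_estimator_div hg hx ν))

section LinLinLoss

variable (a b : ℝ)

lemma linLinLoss_eq_add_max (y : ℝ) :
    linLinLoss a b y = a * (1 - y) + (a + b) * max (y - 1) 0 := by
  rw [linLinLoss]
  split_ifs with hy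
  · rw [max_eq_right (by linarith)]; ring
  · rw [max_eq_left (by linarith)]; ring

lemma continuous_linLinLoss : Continuous (linLinLoss a b) := by
  simp only [funext (linLinLoss_eq_add_max a b)]
  fun_prop

lemma abs_linLinLoss_le (y : ℝ) : |linLinLoss a b y| ≤ (|a| + |b|) * (1 + |y|) := by
  have hy : |1 - y| ≤ 1 + |y| := by simpa using abs_sub 1 y
  rw [linLinLoss]
  split_ifs
  · rw [abs_mul]
    gcongr
    exact le_add_of_nonneg_right (abs_nonneg b)
  · rw [abs_mul, abs_sub_comm]
    gcongr
    exact le_add_of_nonneg_left (abs_nonneg a)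

lemma abs_linLinLoss_le_pow {k : ℕ} (hk : k ≠ 0) (y : ℝ) :
    |linLinLoss a b y| ≤ 2 * (|a| + |b|) * (1 + |y| ^ k) := by
  have hy : |y| ≤ 1 + |y| ^ k := by
    rcases le_total |y| 1 with h | h
    · exact h.trans (le_add_of_nonneg_right (by positivity))
    · exact (le_self_pow₀ h hk).trans (le_add_of_nonneg_left zero_le_one)
  calc |linLinLoss a b y| ≤ (|a| + |b|) * (1 + |y|) := abs_linLinLoss_le a b y
    _ ≤ (|a| + |b|) * (2 * (1 + |y| ^ k)) := by
        gcongr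
        linarith [pow_nonneg (abs_nonneg y) k]
    _ = 2 * (|a| + |b|) * (1 + |y| ^ k) := by ring

lemma mul_linLinLoss_div {x : ℝ} (hx : 0 < x) (Ω : ℝ) :
    x * linLinLoss a b (Ω / x) = a * (x - Ω) + (a + b) * max (Ω - x) 0 := by
  have hmax : x * max (Ω / x - 1) 0 = max (Ω - x) 0 := by
    rw [mul_max_of_nonneg _ _ hx.le, mul_sub_one, mul_div_cancel₀ Ω hx.ne', mul_zero]
  rw [linLinLoss_eq_add_max, ← hmax]
  field_simp

variable {Ω : ℝ} (k : ℕ)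

lemma pow_mul_exp_neg_mul_max (x : ℝ) :
    x ^ k * exp (-x) * max (Ω - x) 0 = (Iic Ω).indicator
      (fun x => Ω * (x ^ k * exp (-x)) - x ^ (k + 1) * exp (-x)) x := by
  by_cases hx : x ≤ Ω
  · rw [indicator_of_mem (mem_Iic.2 hx), max_eq_left (sub_nonneg.2 hx)]; ring
  · rw [indicator_of_notMem (mem_Iic.not.2 hx), max_eq_right (by linarith), mul_zero]

lemma integrableOn_pow_mul_exp_neg_mul_max :
    IntegrableOn (fun x : ℝ => x ^ k * exp (-x) * max (Ω - x) 0) (Ioi 0) := by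
  simp only [pow_mul_exp_neg_mul_max]
  exact (((integrableOn_pow_mul_exp_neg k).const_mul Ω).sub
    (integrableOn_pow_mul_exp_neg (k + 1))).indicator measurableSet_Iic

lemma integral_pow_mul_exp_neg_mul_max (hΩ : 0 ≤ Ω) :
    ∫ x in Ioi (0 : ℝ), x ^ k * exp (-x) * max (Ω - x) 0 =
      Ω * (k.factorial * lowerGamma (k + 1) Ω) -
        (k + 1).factorial * lowerGamma (k + 1 + 1) Ω := by
  have hint (j : ℕ) : IntervalIntegrable (fun x : ℝ => x ^ j * exp (-x)) volume 0 Ω :=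
    Continuous.intervalIntegrable (by fun_prop) _ _
  have hsucc := integral_zero_pow_mul_exp_neg (k + 1) Ω
  rw [Nat.cast_succ] at hsucc
  simp only [pow_mul_exp_neg_mul_max]
  rw [setIntegral_indicator measurableSet_Iic, Ioi_inter_Iic,
    ← intervalIntegral.integral_of_le hΩ, intervalIntegral.integral_sub ((hint k).const_mul Ω)
      (hint (k + 1)), intervalIntegral.integral_const_mul, integral_zero_pow_mul_exp_neg, hsucc]

lemma integral_pow_succ_mul_exp_neg_mul_linLinLoss (hΩ : 0 ≤ Ω) :
    ∫ x in Ioi (0 : ℝ), x ^ (k + 1) * exp (-x) * linLinLoss a b (Ω / x) =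
      a * ((k + 1).factorial - Ω * k.factorial) +
        (a + b) * (Ω * (k.factorial * lowerGamma (k + 1) Ω) -
          (k + 1).factorial * lowerGamma (k + 1 + 1) Ω) := by
  have hk := integrableOn_pow_mul_exp_neg k
  have hk1 := integrableOn_pow_mul_exp_neg (k + 1)
  have hsplit : ∀ x ∈ Ioi (0 : ℝ), x ^ (k + 1) * exp (-x) * linLinLoss a b (Ω / x) =
      a * (x ^ (k + 1) * exp (-x) - Ω * (x ^ k * exp (-x))) +
        (a + b) * (x ^ k * exp (-x) * max (Ω - x) 0) := fun x hx => by
    linear_combination x ^ k * exp (-x) * mul_linLinLoss_div a b hx Ω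
  have hlinear : IntegrableOn
      (fun x : ℝ => a * (x ^ (k + 1) * exp (-x) - Ω * (x ^ k * exp (-x)))) (Ioi 0) :=
    (hk1.sub (hk.const_mul Ω)).const_mul a
  rw [setIntegral_congr_fun measurableSet_Ioi hsplit,
    integral_add hlinear ((integrableOn_pow_mul_exp_neg_mul_max k).const_mul (a + b)),
    integral_const_mul, integral_const_mul, integral_sub hk1 (hk.const_mul Ω), integral_const_mul,
    integral_pow_mul_exp_neg, integral_pow_mul_exp_neg, integral_pow_mul_exp_neg_mul_max k hΩ]

lemma integral_gamma_mul_linLinLoss {ν : ℕ} (hν : 2 ≤ ν) (hΩ : 0 ≤ Ω) :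
    ∫ x in Ioi (0 : ℝ), x ^ (ν - 1) / (ν - 1).factorial * exp (-x) * linLinLoss a b (Ω / x) =
      (a + b) * Ω * lowerGamma ((ν : ℝ) - 1) Ω / ((ν : ℝ) - 1) -
        (a + b) * lowerGamma (ν : ℝ) Ω + a * (1 - Ω / ((ν : ℝ) - 1)) := by
  obtain ⟨k, rfl⟩ := Nat.exists_eq_add_of_le' hν
  have hcast : ((k + 2 : ℕ) : ℝ) = k + 1 + 1 := by push_cast; ring
  have hfactorial : ((k + 1).factorial : ℝ) = (k + 1) * k.factorial := by
    rw [Nat.factorial_succ]; push_cast; ring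
  simp only [show k + 2 - 1 = k + 1 from rfl, hcast, add_sub_cancel_right, div_mul_eq_mul_div,
    integral_div, integral_pow_succ_mul_exp_neg_mul_linLinLoss a b k hΩ, hfactorial]
  field_simp
  ring

end LinLinLoss

lemma tendsto_natCast_mul_div_add (Ω d : ℝ) :
    Tendsto (fun n : ℕ => n * (Ω / ((n : ℝ) + d))) atTop (𝓝 Ω) := by
  simpa [mul_div_left_comm] using (tendsto_natCast_div_add_atTop d).const_mul Ω

theorem stmt7_general {ν : ℕ} (hν : 2 ≤ ν) (a b : ℝ) {Ω : ℝ} (hΩ : 0 ≤ Ω) {g : ℕ → ℝ}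
    (hg : Tendsto (fun n : ℕ => n * g n) atTop (𝓝 Ω)) :
    Tendsto (risk ν (linLinLoss a b) g) (𝓝[>] 0)
      (𝓝 ((a + b) * Ω * lowerGamma ((ν : ℝ) - 1) Ω / ((ν : ℝ) - 1) -
        (a + b) * lowerGamma (ν : ℝ) Ω + a * (1 - Ω / ((ν : ℝ) - 1)))) := by
  rw [← integral_gamma_mul_linLinLoss a b hν hΩ]
  exact tendsto_risk_s7 (by omega) (ae_of_all _ fun _ => (continuous_linLinLoss a b).continuousAt)
    (abs_linLinLoss_le_pow a b (by omega)) hg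

theorem stmt7 (ν : ℕ) (hν : 2 ≤ ν) (a b : ℝ) (ha : 0 ≤ a) (hb : 0 ≤ b)
    (hab : (a, b) ≠ (0, 0)) (Ω d : ℝ) (hΩ : 0 < Ω) (hd : -(ν : ℝ) < d) :
    Filter.Tendsto (risk ν (linLinLoss a b) (fun n => Ω / ((n : ℝ) + d)))
      (nhdsWithin 0 (Set.Ioi 0))
      (nhds ((a + b) * Ω * lowerGamma ((ν : ℝ) - 1) Ω / ((ν : ℝ) - 1) -
        (a + b) * lowerGamma (ν : ℝ) Ω + a * (1 - Ω / ((ν : ℝ) - 1)))) := by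
  exact stmt7_general hν a b hΩ.le (tendsto_natCast_mul_div_add Ω d)
end

section
/- Let ν ≥ 2 be an integer and a, b > 0. Define G(Ω) = bΩ γ(ν−1, Ω)/(ν−1) + (a−b) γ(ν, Ω) − aν γ(ν+1, Ω)/Ω + a(ν/Ω − 1) for Ω > 0. Then G is differentiable with G′(Ω) = b γ(ν−1, Ω)/(ν−1) − aν(1 − γ(ν+1, Ω))/Ω², which is strictly increasing in Ω; consequently there is a unique Ω* > 0 satisfying (Ω*)²/(ν(ν−1)) = a(1 − γ(ν+1, Ω*))/(b γ(ν−1, Ω*)), and Ω* is the unique global minimizer of G on (0,∞). -/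
/-!
As a function of `u`, `lowerGamma t u` is the cumulative distribution function of the gamma
distribution with shape `t` and rate `1`, whose density `p t` satisfies
`u * p t u = t * p (t + 1) u`. This recurrence makes all the terms in which a density occurs cancel
from the derivative of the risk `G`, so that only the stated `G'` remains. There
`lowerGamma (ν - 1)` increases, while `1 - lowerGamma (ν + 1)` and `1 / Ω ^ 2` are positive and
decrease, hence `G'` is strictly increasing and `G` is strictly convex. Since `G'` tends to `-∞` at
`0` and to `b / (ν - 1) > 0` at `∞`, it has a zero, and a critical point of a strictly convex
function is its only minimizer.
-/

open Real Filter Set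

/-- Asymptotic risk under normalized inverse-linear loss, as a function of `Ω`. -/
noncomputable def Gil (ν : ℕ) (a b Ω : ℝ) : ℝ :=
  b * Ω * lowerGamma ((ν : ℝ) - 1) Ω / ((ν : ℝ) - 1) +
    (a - b) * lowerGamma (ν : ℝ) Ω -
    a * (ν : ℝ) * lowerGamma ((ν : ℝ) + 1) Ω / Ω + a * ((ν : ℝ) / Ω - 1)

section

open MeasureTheory ProbabilityTheory Topology

section StrictConvex

variable {f f' : ℝ → ℝ} {s : Set ℝ} {x y : ℝ}

lemma strictConvexOn_of_hasDerivAt_of_strictMonoOn (hs : Convex ℝ s)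
    (hf : ∀ z ∈ s, HasDerivAt f (f' z) z) (hf' : StrictMonoOn f' s) : StrictConvexOn ℝ s f := by
  refine StrictMonoOn.strictConvexOn_of_deriv hs
    (fun z hz ↦ (hf z hz).continuousAt.continuousWithinAt) ?_
  exact (hf'.congr fun z hz ↦ (hf z hz).deriv.symm).mono interior_subset

lemma lt_of_strictConvexOn_of_hasDerivAt_zero (hf : StrictConvexOn ℝ s f) (hx : x ∈ s)
    (hy : y ∈ s) (hyx : y ≠ x) (hf' : HasDerivAt f 0 x) : f x < f y := by
  rcases hyx.lt_or_gt with h | h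
  · exact (slope_neg_iff_of_le h.le).1 (hf.slope_lt_of_hasDerivAt hy hx h hf')
  · exact (slope_pos_iff_of_le h.le).1 (hf.lt_slope_of_hasDerivAt hx hy h hf')

end StrictConvex

lemma mul_gammaPDFReal_eq_mul_add_one {t r : ℝ} (ht : t ≠ 0) (hr : r ≠ 0) (x : ℝ) :
    r * x * gammaPDFReal t r x = t * gammaPDFReal (t + 1) r x := by
  unfold gammaPDFReal
  split_ifs with hx
  · have hpow : x ^ t = x ^ (t - 1) * x := by
      rcases hx.eq_or_lt with rfl | hx
      · simp [ht]
      · rw [← rpow_add_one hx.ne', sub_add_cancel]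
    rw [Real.Gamma_add_one ht, rpow_add_one hr, add_sub_cancel_right, hpow]
    field_simp
  · simp

lemma gammaPDFReal_one_of_nonneg (t : ℝ) {x : ℝ} (hx : 0 ≤ x) :
    gammaPDFReal t 1 x = x ^ (t - 1) * Real.exp (-x) / Real.Gamma t := by
  rw [gammaPDFReal, if_pos hx, one_rpow, one_mul]
  ring

section LowerGamma

variable {t u : ℝ}

lemma lowerGamma_zero (t : ℝ) : lowerGamma t 0 = 0 := by
  simp [lowerGamma]

lemma intervalIntegrable_rpow_mul_exp_neg (ht : 0 < t) (u v : ℝ) :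
    IntervalIntegrable (fun s : ℝ ↦ s ^ (t - 1) * Real.exp (-s)) volume u v :=
  (intervalIntegral.intervalIntegrable_rpow' (by linarith)).mul_continuousOn (by fun_prop)

lemma continuous_lowerGamma (ht : 0 < t) : Continuous (lowerGamma t) :=
  (intervalIntegral.continuous_primitive (intervalIntegrable_rpow_mul_exp_neg ht) 0).div_const _

lemma hasDerivAt_lowerGamma (ht : 0 < t) (hu : 0 < u) :
    HasDerivAt (lowerGamma t) (gammaPDFReal t 1 u) u := by
  have hmeas : Measurable fun s : ℝ ↦ s ^ (t - 1) * Real.exp (-s) := by fun_prop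
  have hcont : ContinuousAt (fun s : ℝ ↦ s ^ (t - 1) * Real.exp (-s)) u :=
    (continuousAt_rpow_const u _ (.inl hu.ne')).mul (by fun_prop)
  rw [gammaPDFReal_one_of_nonneg t hu.le]
  exact (intervalIntegral.integral_hasDerivAt_right (intervalIntegrable_rpow_mul_exp_neg ht 0 u)
    hmeas.stronglyMeasurable.stronglyMeasurableAtFilter hcont).div_const (Real.Gamma t)

lemma cdf_gammaMeasure_one (ht : 0 < t) (hu : 0 ≤ u) :
    cdf (gammaMeasure t 1) u = lowerGamma t u := by
  have hzero : ∀ x ∈ Iic u \ Icc 0 u, gammaPDFReal t 1 x = 0 :=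
    fun x hx ↦ if_neg fun hx₀ ↦ hx.2 ⟨hx₀, hx.1⟩
  calc
    cdf (gammaMeasure t 1) u = ∫ x in Iic u, gammaPDFReal t 1 x :=
      cdf_gammaMeasure_eq_integral ht one_pos u
    _ = ∫ x in Icc 0 u, gammaPDFReal t 1 x :=
      setIntegral_eq_of_subset_of_forall_sdiff_eq_zero measurableSet_Iic Icc_subset_Iic_self hzero
    _ = ∫ x in Icc 0 u, x ^ (t - 1) * Real.exp (-x) / Real.Gamma t :=
      setIntegral_congr_fun measurableSet_Icc fun x hx ↦ gammaPDFReal_one_of_nonneg t hx.1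
    _ = lowerGamma t u := by
      rw [integral_div, integral_Icc_eq_integral_Ioc, lowerGamma,
        intervalIntegral.integral_of_le hu]

lemma tendsto_lowerGamma_atTop (ht : 0 < t) : Tendsto (lowerGamma t) atTop (𝓝 1) :=
  (tendsto_cdf_atTop (gammaMeasure t 1)).congr' <|
    (eventually_ge_atTop 0).mono fun _ ↦ cdf_gammaMeasure_one ht

lemma strictMonoOn_lowerGamma (ht : 0 < t) : StrictMonoOn (lowerGamma t) (Ici 0) := by
  refine strictMonoOn_of_deriv_pos (convex_Ici 0) (continuous_lowerGamma ht).continuousOn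
    fun u hu ↦ ?_
  rw [interior_Ici, mem_Ioi] at hu
  rw [(hasDerivAt_lowerGamma ht hu).deriv]
  exact gammaPDFReal_pos ht one_pos hu

lemma lowerGamma_pos (ht : 0 < t) (hu : 0 < u) : 0 < lowerGamma t u :=
  (lowerGamma_zero t).symm.trans_lt (strictMonoOn_lowerGamma ht self_mem_Ici hu.le hu)

lemma lowerGamma_le_one (ht : 0 < t) (hu : 0 ≤ u) : lowerGamma t u ≤ 1 :=
  cdf_gammaMeasure_one ht hu ▸ cdf_le_one _ u

end LowerGamma

/-- The asymptotic risk `Gil` with a real parameter `ν`, so that `Gil ν` is `invLinRisk (ν : ℝ)` by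
definition. -/
noncomputable def invLinRisk (ν a b Ω : ℝ) : ℝ :=
  b * Ω * lowerGamma (ν - 1) Ω / (ν - 1) + (a - b) * lowerGamma ν Ω -
    a * ν * lowerGamma (ν + 1) Ω / Ω + a * (ν / Ω - 1)

/-- The derivative of `invLinRisk ν a b` on the positive half-line. -/
noncomputable def invLinRiskDeriv (ν a b Ω : ℝ) : ℝ :=
  b * lowerGamma (ν - 1) Ω / (ν - 1) - a * ν * (1 - lowerGamma (ν + 1) Ω) / Ω ^ 2

section InvLinRisk

variable {ν a b Ω : ℝ}

lemma hasDerivAt_invLinRisk (hν : 1 < ν) (a b : ℝ) (hΩ : 0 < Ω) :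
    HasDerivAt (invLinRisk ν a b) (invLinRiskDeriv ν a b Ω) Ω := by
  have hν₁ : ν - 1 ≠ 0 := by linarith
  have hν₀ : ν ≠ 0 := by linarith
  have hpdf₁ : gammaPDFReal (ν - 1) 1 Ω = (ν - 1) * gammaPDFReal ν 1 Ω / Ω :=
    eq_div_of_mul_eq hΩ.ne' <| by
      simpa [mul_comm] using mul_gammaPDFReal_eq_mul_add_one hν₁ one_ne_zero Ω
  have hpdf₂ : gammaPDFReal (ν + 1) 1 Ω = Ω * gammaPDFReal ν 1 Ω / ν :=
    eq_div_of_mul_eq hν₀ <| by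
      simpa [mul_comm] using (mul_gammaPDFReal_eq_mul_add_one hν₀ one_ne_zero Ω).symm
  have h₁ := ((hasDerivAt_id Ω).const_mul b).mul
    (hasDerivAt_lowerGamma (by linarith : 0 < ν - 1) hΩ) |>.div_const (ν - 1)
  have h₂ := (hasDerivAt_lowerGamma (by linarith : 0 < ν) hΩ).const_mul (a - b)
  have h₃ := ((hasDerivAt_lowerGamma (by linarith : 0 < ν + 1) hΩ).const_mul (a * ν)).div
    (hasDerivAt_id Ω) hΩ.ne'
  have h₄ := (((hasDerivAt_const Ω ν).div (hasDerivAt_id Ω) hΩ.ne').sub_const 1).const_mul a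
  refine (((h₁.add h₂).sub h₃).add h₄).congr_deriv ?_
  simp only [invLinRiskDeriv, id, hpdf₁, hpdf₂]
  field_simp
  ring

lemma strictMonoOn_invLinRiskDeriv (hν : 1 < ν) (ha : 0 ≤ a) (hb : 0 < b) :
    StrictMonoOn (invLinRiskDeriv ν a b) (Ioi 0) := by
  intro x (hx : 0 < x) y (hy : 0 < y) hxy
  have hν₁ : 0 < ν - 1 := by linarith
  have hlt : lowerGamma (ν - 1) x < lowerGamma (ν - 1) y :=
    strictMonoOn_lowerGamma hν₁ hx.le hy.le hxy
  have hle : lowerGamma (ν + 1) x ≤ lowerGamma (ν + 1) y :=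
    (strictMonoOn_lowerGamma (by linarith)).monotoneOn hx.le hy.le hxy.le
  have hnonneg : 0 ≤ 1 - lowerGamma (ν + 1) x :=
    sub_nonneg.2 (lowerGamma_le_one (by linarith) hx.le)
  have hgain : b * lowerGamma (ν - 1) x / (ν - 1) < b * lowerGamma (ν - 1) y / (ν - 1) := by
    gcongr
  have hloss : a * ν * (1 - lowerGamma (ν + 1) y) / y ^ 2 ≤
      a * ν * (1 - lowerGamma (ν + 1) x) / x ^ 2 := by
    gcongr
  unfold invLinRiskDeriv
  linarith

lemma strictConvexOn_invLinRisk (hν : 1 < ν) (ha : 0 ≤ a) (hb : 0 < b) :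
    StrictConvexOn ℝ (Ioi 0) (invLinRisk ν a b) :=
  strictConvexOn_of_hasDerivAt_of_strictMonoOn (convex_Ioi 0)
    (fun _ ↦ hasDerivAt_invLinRisk hν a b) (strictMonoOn_invLinRiskDeriv hν ha hb)

lemma continuousOn_invLinRiskDeriv (hν : 1 < ν) (a b : ℝ) :
    ContinuousOn (invLinRiskDeriv ν a b) (Ioi 0) := by
  have h₁ := continuous_lowerGamma (by linarith : 0 < ν - 1)
  have h₂ := continuous_lowerGamma (by linarith : 0 < ν + 1)
  refine ContinuousOn.sub (by fun_prop) (ContinuousOn.div (by fun_prop) (by fun_prop) ?_)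
  exact fun Ω hΩ ↦ (pow_pos hΩ 2).ne'

lemma tendsto_invLinRiskDeriv_nhdsGT_zero (hν : 1 < ν) (ha : 0 < a) (b : ℝ) :
    Tendsto (invLinRiskDeriv ν a b) (𝓝[>] 0) atBot := by
  have hγ {t : ℝ} (ht : 0 < t) : Tendsto (lowerGamma t) (𝓝[>] 0) (𝓝 0) :=
    ((continuous_lowerGamma ht).tendsto' 0 0 (lowerGamma_zero t)).mono_left nhdsWithin_le_nhds
  have hgain : Tendsto (fun Ω ↦ b * lowerGamma (ν - 1) Ω / (ν - 1)) (𝓝[>] 0) (𝓝 0) := by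
    simpa using ((hγ (by linarith : 0 < ν - 1)).const_mul b).div_const (ν - 1)
  have hnum : Tendsto (fun Ω ↦ a * ν * (1 - lowerGamma (ν + 1) Ω)) (𝓝[>] 0) (𝓝 (a * ν)) := by
    simpa using ((hγ (by linarith : 0 < ν + 1)).const_sub 1).const_mul (a * ν)
  have hinv : Tendsto (fun Ω : ℝ ↦ (Ω ^ 2)⁻¹) (𝓝[>] 0) atTop := by
    simpa only [Function.comp_def, inv_pow] using
      (tendsto_pow_atTop two_ne_zero).comp (tendsto_inv_nhdsGT_zero (𝕜 := ℝ))
  have hloss := hnum.pos_mul_atTop (by positivity) hinv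
  exact (hgain.add_atBot (tendsto_neg_atTop_atBot.comp hloss)).congr fun _ ↦
    (sub_eq_add_neg _ _).symm

lemma tendsto_invLinRiskDeriv_atTop (hν : 1 < ν) (a b : ℝ) :
    Tendsto (invLinRiskDeriv ν a b) atTop (𝓝 (b / (ν - 1))) := by
  have hgain :=
    ((tendsto_lowerGamma_atTop (by linarith : 0 < ν - 1)).const_mul b).div_const (ν - 1)
  have hloss := (((tendsto_lowerGamma_atTop (by linarith : 0 < ν + 1)).const_sub 1).const_mul
    (a * ν)).div_atTop (tendsto_pow_atTop two_ne_zero)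
  have hlim := hgain.sub hloss
  rw [mul_one, sub_zero] at hlim
  exact hlim

lemma exists_invLinRiskDeriv_eq_zero (hν : 1 < ν) (ha : 0 < a) (hb : 0 < b) :
    ∃ Ω, 0 < Ω ∧ invLinRiskDeriv ν a b Ω = 0 :=
  isPreconnected_Ioi.intermediate_value_Iio (l₁ := 𝓝[>] 0) inf_le_right
    (le_principal_iff.2 (Ioi_mem_atTop 0)) (continuousOn_invLinRiskDeriv hν a b)
    (tendsto_invLinRiskDeriv_nhdsGT_zero hν ha b) (tendsto_invLinRiskDeriv_atTop hν a b)
    (div_pos hb (sub_pos.2 hν))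

lemma invLinRiskDeriv_eq_zero_iff (hν : 1 < ν) (a : ℝ) (hb : b ≠ 0) (hΩ : 0 < Ω) :
    invLinRiskDeriv ν a b Ω = 0 ↔
      Ω ^ 2 / (ν * (ν - 1)) =
        a * (1 - lowerGamma (ν + 1) Ω) / (b * lowerGamma (ν - 1) Ω) := by
  have hν₁ : 0 < ν - 1 := by linarith
  have hγ := (lowerGamma_pos hν₁ hΩ).ne'
  rw [invLinRiskDeriv, sub_eq_zero, div_eq_div_iff hν₁.ne' (by positivity),
    div_eq_div_iff (by positivity) (by positivity)]
  constructor <;> intro h <;> linear_combination h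

end InvLinRisk

theorem stmt10_general (ν : ℝ) (hν : 1 < ν) (a b : ℝ) (ha : 0 < a) (hb : 0 < b) :
    (∀ Ω : ℝ, 0 < Ω → HasDerivAt (invLinRisk ν a b) (invLinRiskDeriv ν a b Ω) Ω) ∧
      StrictMonoOn (invLinRiskDeriv ν a b) (Ioi 0) ∧
      (∃! Ωs : ℝ, 0 < Ωs ∧
        Ωs ^ 2 / (ν * (ν - 1)) =
          a * (1 - lowerGamma (ν + 1) Ωs) / (b * lowerGamma (ν - 1) Ωs)) ∧
      ∀ Ωs : ℝ, 0 < Ωs →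
        Ωs ^ 2 / (ν * (ν - 1)) =
          a * (1 - lowerGamma (ν + 1) Ωs) / (b * lowerGamma (ν - 1) Ωs) →
        ∀ Ω : ℝ, 0 < Ω → Ω ≠ Ωs → invLinRisk ν a b Ωs < invLinRisk ν a b Ω := by
  have hderiv := fun Ω (hΩ : 0 < Ω) ↦ hasDerivAt_invLinRisk hν a b hΩ
  have hmono := strictMonoOn_invLinRiskDeriv hν ha.le hb
  have hcrit := fun Ω (hΩ : 0 < Ω) ↦ invLinRiskDeriv_eq_zero_iff hν a hb.ne' hΩ
  refine ⟨hderiv, hmono, ?_, fun Ωs hΩs heq Ω hΩ hne ↦ ?_⟩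
  · obtain ⟨Ωs, hΩs, hzero⟩ := exists_invLinRiskDeriv_eq_zero hν ha hb
    refine ⟨Ωs, ⟨hΩs, (hcrit Ωs hΩs).1 hzero⟩, fun Ω ⟨hΩ, heq⟩ ↦ ?_⟩
    exact hmono.injOn hΩ hΩs (((hcrit Ω hΩ).2 heq).trans hzero.symm)
  · have hzero : HasDerivAt (invLinRisk ν a b) 0 Ωs :=
      (hcrit Ωs hΩs).2 heq ▸ hderiv Ωs hΩs
    exact lt_of_strictConvexOn_of_hasDerivAt_zero (strictConvexOn_invLinRisk hν ha.le hb)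
      hΩs hΩ hne hzero

end

theorem stmt10 (ν : ℕ) (hν : 2 ≤ ν) (a b : ℝ) (ha : 0 < a) (hb : 0 < b) :
    (∀ Ω : ℝ, 0 < Ω →
        HasDerivAt (Gil ν a b)
          (b * lowerGamma ((ν : ℝ) - 1) Ω / ((ν : ℝ) - 1) -
            a * (ν : ℝ) * (1 - lowerGamma ((ν : ℝ) + 1) Ω) / Ω ^ 2) Ω) ∧
      StrictMonoOn
        (fun Ω : ℝ => b * lowerGamma ((ν : ℝ) - 1) Ω / ((ν : ℝ) - 1) -
          a * (ν : ℝ) * (1 - lowerGamma ((ν : ℝ) + 1) Ω) / Ω ^ 2)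
        (Set.Ioi 0) ∧
      (∃! Ωs : ℝ, 0 < Ωs ∧
        Ωs ^ 2 / ((ν : ℝ) * ((ν : ℝ) - 1)) =
          a * (1 - lowerGamma ((ν : ℝ) + 1) Ωs) / (b * lowerGamma ((ν : ℝ) - 1) Ωs)) ∧
      ∀ Ωs : ℝ, 0 < Ωs →
        Ωs ^ 2 / ((ν : ℝ) * ((ν : ℝ) - 1)) =
          a * (1 - lowerGamma ((ν : ℝ) + 1) Ωs) / (b * lowerGamma ((ν : ℝ) - 1) Ωs) →
        ∀ Ω : ℝ, 0 < Ω → Ω ≠ Ωs → Gil ν a b Ωs < Gil ν a b Ω :=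
  stmt10_general ν (Nat.one_lt_cast.2 hν) a b ha hb
end
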